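/- Let n range over positive integers. For each n, let D(n) be the set of quadruples (n,a,b,c) ∈ ℤ⁴ with gcd(n,a,b,c)=1 satisfying (n+a+b+c)² = 2(n²+a²+b²+c²) and n+a ≥ 0, n+b ≥ 0, and let ID(n) be the (finite) set of orbits of D(n) under the group Ap₁. Let ID₀(n) ⊆ ID(n) be the set of orbits containing some quadruple with a nonpositive entry. Then the ratio |ID₀(n)|/|ID(n)| tends to 3/π as n → ∞. -/

import Mathlib

open Matrix

/-- The Apollonian move `S₄`. -/
def S₄ : Matrix (Fin 4) (Fin 4) ℤ := !![1,0,0,0; 0,1,0,0; 0,0,1,0; 2,2,2,-1]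

/-- The permutation matrix swapping coordinates 2 and 3. -/
def P₂₃ : Matrix (Fin 4) (Fin 4) ℤ := !![1,0,0,0; 0,0,1,0; 0,1,0,0; 0,0,0,1]

/-- The permutation matrix swapping coordinates 2 and 4. -/
def P₂₄ : Matrix (Fin 4) (Fin 4) ℤ := !![1,0,0,0; 0,0,0,1; 0,0,1,0; 0,1,0,0]

/-- The group `Ap₁` generated by `P₂₃`, `P₂₄`, `S₄`; since the generators are
involutions, it consists exactly of all finite products of the generators. -/
def Ap₁ : Submonoid (Matrix (Fin 4) (Fin 4) ℤ) := Submonoid.closure {P₂₃, P₂₄, S₄}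

/-- The set of primitive integral Descartes quadruples `(n, a, b, c)` with
`n + a ≥ 0` and `n + b ≥ 0`. -/
def DSet (n : ℤ) : Set (Fin 4 → ℤ) :=
  {q | q 0 = n ∧
    Int.gcd (Int.gcd (Int.gcd (q 0) (q 1) : ℤ) (q 2) : ℤ) (q 3) = 1 ∧
    (q 0 + q 1 + q 2 + q 3) ^ 2 = 2 * ((q 0) ^ 2 + (q 1) ^ 2 + (q 2) ^ 2 + (q 3) ^ 2) ∧
    0 ≤ q 0 + q 1 ∧ 0 ≤ q 0 + q 2}

/-- The set of `Ap₁`-orbits of elements of `D(n)`. -/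
def ID (n : ℤ) : Set (Set (Fin 4 → ℤ)) :=
  {O | ∃ q ∈ DSet n, O = {q' | ∃ M ∈ Ap₁, q' = M.mulVec q}}

/-- The orbits containing a quadruple with a nonpositive entry. -/
def ID₀ (n : ℤ) : Set (Set (Fin 4 → ℤ)) :=
  {O ∈ ID n | ∃ q ∈ O, ∃ i : Fin 4, q i ≤ 0}

/-!
A quadruple `(n, a, b, c)` is encoded by the binary quadratic form
`(n + a) x² + (n + a + b - c) x y + (n + b) y²`; the Descartes equation says that its determinant is
`n²`, and `Ap₁` acts on primitive positive forms through `GL₂(ℤ)`. So orbits correspond to reduced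
forms, up to coincidences on the boundary of the reduction domain, where there are only `O(d(n)²)`
forms. An orbit lies in `ID₀ n` exactly when the minimum of its form is at most `n`.

A primitive positive form of determinant `n²` is the norm form of a lattice
`Λ_u = {v ∈ ℤ[i] | v is parallel to u modulo n}` of index `n`, with `u` invertible in `ℤ[i] / n`,
and every reduced form off the boundary comes from exactly `4 φ(n)` residues `u`. The quotient is
therefore asymptotically the proportion of the `u` for which `Λ_u` has a nonzero vector of norm at
most `n`.

For `n ≥ 2` the vectors of `Λ_u` of norm at most `n` are the multiples of a single `v`, because two
independent ones would span a square lattice `ℤ[i] v` of covolume `n`, making all of its vectors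
divisible by `n`. Möbius inversion over these multiples gives
`∑_{k ≤ n} μ(k) #{w ∈ Λ_u | 0 < N w ≤ n / k²} = 2` if there is such a `v`, and `0` otherwise. Summed
over `u`, the left side is found by sorting the vectors `w` by the largest divisor of `n` dividing
them and sieving by the Gaussian primes dividing `n`; the count for `X = n / k²` is `π X / n` per
residue `u` up to a negligible error. The proportion is thus asymptotically
`(π / 2) ∑ μ(k) / k² = (π / 2) (6 / π²) = 3 / π`.
-/

namespace ApollonianStair

open MeasureTheory

/-! ### Gaussian integers in a disc -/

theorem intCast_norm_eq_norm_sq (v : GaussianInt) : (v.norm : ℝ) = ‖(v : ℂ)‖ ^ 2 := by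
  rw [← Complex.normSq_eq_norm_sq, ← GaussianInt.intCast_real_norm]

theorem one_le_norm {v : GaussianInt} (hv : v ≠ 0) : (1 : ℝ) ≤ v.norm := by
  exact_mod_cast GaussianInt.norm_pos.2 hv

theorem norm_le_sqrt_iff {v : GaussianInt} {X : ℝ} (hX : 0 ≤ X) :
    ‖(v : ℂ)‖ ≤ √X ↔ (v.norm : ℝ) ≤ X := by
  rw [intCast_norm_eq_norm_sq, Real.le_sqrt (norm_nonneg _) hX]

theorem finite_norm_sub_le (c : ℂ) (ρ : ℝ) : {w : GaussianInt | ‖(w : ℂ) - c‖ ≤ ρ}.Finite := by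
  let e (w : GaussianInt) : ℤ × ℤ := (w.re, w.im)
  have he : Function.Injective e := fun v w h =>
    Zsqrtd.ext (congrArg Prod.fst h) (congrArg Prod.snd h)
  refine Set.Finite.of_finite_image (((Set.finite_Icc ⌊c.re - ρ⌋ ⌈c.re + ρ⌉).prod
    (Set.finite_Icc ⌊c.im - ρ⌋ ⌈c.im + ρ⌉)).subset ?_) he.injOn
  rintro _ ⟨w, hw, rfl⟩
  have hre := abs_le.1 ((Complex.abs_re_le_norm _).trans hw)
  have him := abs_le.1 ((Complex.abs_im_le_norm _).trans hw)
  simp only [Complex.sub_re, Complex.sub_im, ← GaussianInt.intCast_re,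
    ← GaussianInt.intCast_im] at hre him
  refine ⟨⟨Int.floor_le_iff.2 ?_, Int.le_ceil_iff.2 ?_⟩, Int.floor_le_iff.2 ?_,
    Int.le_ceil_iff.2 ?_⟩ <;> dsimp only [e] <;> linarith

/-- The Gaussian integers in the closed disc with centre `c` and radius `ρ`. -/
noncomputable def latticePoints (c : ℂ) (ρ : ℝ) : Finset GaussianInt :=
  (finite_norm_sub_le c ρ).toFinset

theorem mem_latticePoints {c : ℂ} {ρ : ℝ} {w : GaussianInt} :
    w ∈ latticePoints c ρ ↔ ‖(w : ℂ) - c‖ ≤ ρ := by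
  simp [latticePoints]

/-- The half-open unit square with lower left corner `w`. -/
def unitSquare (w : GaussianInt) : Set ℂ :=
  Complex.measurableEquivRealProd ⁻¹'
    (Set.Ico (w.re : ℝ) (w.re + 1) ×ˢ Set.Ico (w.im : ℝ) (w.im + 1))

theorem mem_unitSquare {w : GaussianInt} {z : ℂ} :
    z ∈ unitSquare w ↔ ⌊z.re⌋ = w.re ∧ ⌊z.im⌋ = w.im := by
  simp [unitSquare, Complex.measurableEquivRealProd_apply, Int.floor_eq_iff]

theorem norm_sub_le_of_mem_unitSquare {w : GaussianInt} {z : ℂ} (h : z ∈ unitSquare w) :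
    ‖z - w‖ ≤ 2 := by
  rw [mem_unitSquare] at h
  have key : ‖z - w‖ ≤ |Int.fract z.re| + |Int.fract z.im| := by
    simpa [Int.fract, h.1, h.2, ← GaussianInt.intCast_re, ← GaussianInt.intCast_im] using
      Complex.norm_le_abs_re_add_abs_im (z - w)
  rw [Int.abs_fract, Int.abs_fract] at key
  linarith [Int.fract_lt_one z.re, Int.fract_lt_one z.im]

theorem volume_biUnion_unitSquare (S : Finset GaussianInt) :
    volume (⋃ w ∈ S, unitSquare w) = S.card := by
  have hmeas (w : GaussianInt) : MeasurableSet (Set.Ico (w.re : ℝ) (w.re + 1) ×ˢ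
      Set.Ico (w.im : ℝ) (w.im + 1)) := measurableSet_Ico.prod measurableSet_Ico
  have hvol (w : GaussianInt) : volume (unitSquare w) = 1 := by
    rw [unitSquare, Complex.volume_preserving_equiv_real_prod.measure_preimage
      (hmeas w).nullMeasurableSet, Measure.volume_eq_prod, Measure.prod_prod]
    simp
  rw [measure_biUnion_finset]
  · simp [hvol]
  · refine fun w _ w' _ hne => Set.disjoint_left.2 fun z hz hz' => hne ?_
    rw [mem_unitSquare] at hz hz'
    exact Zsqrtd.ext (hz.1.symm.trans hz'.1) (hz.2.symm.trans hz'.2)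
  · exact fun w _ => Complex.measurableEquivRealProd.measurable (hmeas w)

theorem toReal_volume_closedBall (c : ℂ) {r : ℝ} (hr : 0 ≤ r) :
    (volume (Metric.closedBall c r)).toReal = Real.pi * r ^ 2 := by
  simp [Complex.volume_closedBall, hr, mul_comm]

theorem card_latticePoints_le (c : ℂ) {ρ : ℝ} (hρ : 0 ≤ ρ) :
    ((latticePoints c ρ).card : ℝ) ≤ Real.pi * (ρ + 2) ^ 2 := by
  have hsub : (⋃ w ∈ latticePoints c ρ, unitSquare w) ⊆ Metric.closedBall c (ρ + 2) := by
    refine Set.iUnion₂_subset fun w hw z hz => ?_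
    rw [Metric.mem_closedBall, dist_eq_norm]
    calc ‖z - c‖ ≤ ‖z - w‖ + ‖(w : ℂ) - c‖ := norm_sub_le_norm_sub_add_norm_sub _ _ _
      _ ≤ ρ + 2 := by
        linarith [norm_sub_le_of_mem_unitSquare hz, mem_latticePoints.1 hw]
  have hle := ENNReal.toReal_mono measure_closedBall_lt_top.ne (measure_mono (μ := volume) hsub)
  rwa [volume_biUnion_unitSquare, toReal_volume_closedBall c (by linarith),
    ENNReal.toReal_natCast] at hle

theorem le_card_latticePoints (c : ℂ) {ρ : ℝ} (hρ : 2 ≤ ρ) :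
    Real.pi * (ρ - 2) ^ 2 ≤ (latticePoints c ρ).card := by
  have hsub : Metric.closedBall c (ρ - 2) ⊆ ⋃ w ∈ latticePoints c ρ, unitSquare w := by
    intro z hz
    rw [Metric.mem_closedBall, dist_eq_norm] at hz
    let w : GaussianInt := ⟨⌊z.re⌋, ⌊z.im⌋⟩
    have hzw : z ∈ unitSquare w := mem_unitSquare.2 ⟨rfl, rfl⟩
    refine Set.mem_biUnion (Finset.mem_coe.2 (mem_latticePoints.2 ?_)) hzw
    calc ‖(w : ℂ) - c‖ ≤ ‖(w : ℂ) - z‖ + ‖z - c‖ := norm_sub_le_norm_sub_add_norm_sub _ _ _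
      _ ≤ ρ := by
        linarith [norm_sub_le_of_mem_unitSquare hzw, norm_sub_rev z w]
  have hle := ENNReal.toReal_mono (by simp [volume_biUnion_unitSquare])
    (measure_mono (μ := volume) hsub)
  rwa [volume_biUnion_unitSquare, toReal_volume_closedBall c (by linarith),
    ENNReal.toReal_natCast] at hle

theorem abs_card_latticePoints_sub_le (c : ℂ) {ρ : ℝ} (hρ : 0 ≤ ρ) :
    |((latticePoints c ρ).card : ℝ) - Real.pi * ρ ^ 2| ≤ 4 * Real.pi * (ρ + 1) := by
  have hpi := Real.pi_pos
  rw [abs_le]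
  constructor
  · rcases le_total 2 ρ with h | h
    · nlinarith [le_card_latticePoints c h]
    · nlinarith [Nat.cast_nonneg (α := ℝ) (latticePoints c ρ).card,
        mul_nonneg hpi.le (mul_nonneg hρ (sub_nonneg.2 h)), mul_nonneg hpi.le hρ]
  · nlinarith [card_latticePoints_le c hρ]

theorem finite_norm_le (X : ℝ) : {v : GaussianInt | v ≠ 0 ∧ (v.norm : ℝ) ≤ X}.Finite := by
  refine (latticePoints 0 (√X)).finite_toSet.subset fun v ⟨_, hv⟩ => ?_
  rw [Finset.mem_coe, mem_latticePoints, sub_zero]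
  exact Real.le_sqrt_of_sq_le (intCast_norm_eq_norm_sq v ▸ hv)

/-- The nonzero Gaussian integers of norm at most `X`. -/
noncomputable def disc (X : ℝ) : Finset GaussianInt := (finite_norm_le X).toFinset

@[simp]
theorem mem_disc {X : ℝ} {v : GaussianInt} : v ∈ disc X ↔ v ≠ 0 ∧ (v.norm : ℝ) ≤ X := by
  simp [disc]

theorem disc_eq_empty {X : ℝ} (hX : X < 1) : disc X = ∅ :=
  Finset.eq_empty_of_forall_notMem fun v hv => by
    rw [mem_disc] at hv
    linarith [one_le_norm hv.1, hv.2]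

theorem latticePoints_zero_sqrt [DecidableEq GaussianInt] {X : ℝ} (hX : 0 ≤ X) :
    latticePoints 0 (√X) = insert 0 (disc X) := by
  ext v
  rw [mem_latticePoints, sub_zero, norm_le_sqrt_iff hX, Finset.mem_insert, mem_disc]
  by_cases hv : v = 0 <;> simp [hv, hX]

theorem abs_card_disc_sub_le {X : ℝ} (hX : 0 ≤ X) :
    |((disc X).card : ℝ) - Real.pi * X| ≤ (8 * Real.pi + 1) * √X := by
  have hpi := Real.pi_pos
  rcases lt_or_ge X 1 with h | h
  · have hXle : X ≤ √X := Real.le_sqrt_of_sq_le (by nlinarith)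
    rw [disc_eq_empty h, Finset.card_empty, Nat.cast_zero, zero_sub, abs_neg,
      abs_of_nonneg (by positivity)]
    nlinarith [mul_nonneg hpi.le (sub_nonneg.2 hXle), mul_nonneg hpi.le (Real.sqrt_nonneg X)]
  · have hs : 1 ≤ √X := Real.one_le_sqrt.2 h
    have key := abs_card_latticePoints_sub_le 0 (Real.sqrt_nonneg X)
    classical
    rw [latticePoints_zero_sqrt hX, Finset.card_insert_of_notMem (by simp), Real.sq_sqrt hX,
      abs_le] at key
    push_cast at key
    rw [abs_le]
    constructor <;> nlinarith [key.1, key.2, mul_nonneg hpi.le (sub_nonneg.2 hs)]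

open scoped Classical in
/-- The nonzero Gaussian integers of norm at most `X` divisible by no element of `S`. -/
noncomputable def sieved (S : Finset GaussianInt) (X : ℝ) : Finset GaussianInt :=
  {w ∈ disc X | ∀ p ∈ S, ¬ p ∣ w}

theorem mem_sieved {S : Finset GaussianInt} {X : ℝ} {w : GaussianInt} :
    w ∈ sieved S X ↔ (w ≠ 0 ∧ (w.norm : ℝ) ≤ X) ∧ ∀ p ∈ S, ¬ p ∣ w := by
  simp [sieved]

theorem mul_mem_disc_iff {a w : GaussianInt} (ha : a ≠ 0) {X : ℝ} :
    a * w ∈ disc X ↔ w ∈ disc (X / a.norm) := by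
  have hpos : (0 : ℝ) < a.norm := by linarith [one_le_norm ha]
  rw [mem_disc, mem_disc, mul_ne_zero_iff, Zsqrtd.norm_mul, le_div_iff₀ hpos, mul_comm a.norm]
  simp [ha]

theorem card_sieved_insert_add {S : Finset GaussianInt} {a : GaussianInt} (ha : Prime a)
    (hS : ∀ p ∈ S, Prime p) (hne : ∀ p ∈ S, ¬ Associated p a) (X : ℝ) :
    (sieved (insert a S) X).card + (sieved S (X / a.norm)).card = (sieved S X).card := by
  classical
  have hmul (w : GaussianInt) : a * w ∈ sieved S X ↔ w ∈ sieved S (X / a.norm) := by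
    have hdvd (p) (hp : p ∈ S) : p ∣ a * w ↔ p ∣ w := by
      rw [(hS p hp).dvd_mul]
      exact or_iff_right fun h => hne p hp ((hS p hp).associated_of_dvd ha h)
    simp only [sieved, Finset.mem_filter, mul_mem_disc_iff ha.ne_zero]
    exact and_congr_right' (forall₂_congr fun p hp => not_congr (hdvd p hp))
  have himage : {w ∈ sieved S X | a ∣ w} = (sieved S (X / a.norm)).image (a * ·) := by
    ext w
    simp only [Finset.mem_filter, Finset.mem_image]
    constructor
    · rintro ⟨hw, z, rfl⟩
      exact ⟨z, (hmul z).1 hw, rfl⟩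
    · rintro ⟨z, hz, rfl⟩
      exact ⟨(hmul z).2 hz, dvd_mul_right a z⟩
  have hinsert : sieved (insert a S) X = {w ∈ sieved S X | ¬ a ∣ w} := by
    ext w
    simp only [mem_sieved, Finset.mem_filter, Finset.forall_mem_insert]
    tauto
  have hcard := Finset.card_image_of_injective (sieved S (X / a.norm))
    (mul_right_injective₀ ha.ne_zero)
  rw [hinsert, ← hcard, ← himage, add_comm, Finset.card_filter_add_card_filter_not]

theorem abs_card_sieved_sub_le (S : Finset GaussianInt) (hS : ∀ p ∈ S, Prime p)
    (hne : ∀ p ∈ S, ∀ q ∈ S, Associated p q → p = q) {X : ℝ} (hX : 0 ≤ X) :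
    |((sieved S X).card : ℝ) - Real.pi * X * ∏ p ∈ S, (1 - 1 / (p.norm : ℝ))|
      ≤ 2 ^ S.card * ((8 * Real.pi + 1) * √X) := by
  induction S using Finset.induction_on generalizing X with
  | empty => simpa [sieved] using abs_card_disc_sub_le hX
  | insert a S haS ih =>
    simp only [Finset.forall_mem_insert] at hS hne
    have haS' : ∀ p ∈ S, ¬ Associated p a := fun p hp h => haS ((hne.2 p hp).1 h ▸ hp)
    have ih' {Y : ℝ} (hY : 0 ≤ Y) := ih hS.2 (fun p hp q hq => (hne.2 p hp).2 q hq) hY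
    have hN := one_le_norm hS.1.ne_zero
    set P := ∏ p ∈ S, (1 - 1 / (p.norm : ℝ))
    have hcard : ((sieved (insert a S) X).card : ℝ) =
        (sieved S X).card - (sieved S (X / a.norm)).card := by
      rw [← card_sieved_insert_add hS.1 hS.2 haS' X]
      push_cast
      ring
    have hsplit : ((sieved S X).card : ℝ) - (sieved S (X / a.norm)).card -
        Real.pi * X * ((1 - 1 / (a.norm : ℝ)) * P) =
        (((sieved S X).card : ℝ) - Real.pi * X * P) -
        ((sieved S (X / a.norm)).card - Real.pi * (X / a.norm) * P) := by
      field_simp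
      ring
    rw [Finset.prod_insert haS, Finset.card_insert_of_notMem haS, hcard, hsplit]
    calc |(((sieved S X).card : ℝ) - Real.pi * X * P) -
          ((sieved S (X / a.norm)).card - Real.pi * (X / a.norm) * P)|
        ≤ 2 ^ S.card * ((8 * Real.pi + 1) * √X) +
            2 ^ S.card * ((8 * Real.pi + 1) * √(X / a.norm)) :=
          (abs_sub _ _).trans (add_le_add (ih' hX) (ih' (by positivity)))
      _ ≤ 2 ^ S.card * ((8 * Real.pi + 1) * √X) + 2 ^ S.card * ((8 * Real.pi + 1) * √X) := by
          refine add_le_add_right (mul_le_mul_of_nonneg_left (mul_le_mul_of_nonneg_left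
            (Real.sqrt_le_sqrt (div_le_self hX hN)) (by positivity)) (by positivity)) _
      _ = 2 ^ (S.card + 1) * ((8 * Real.pi + 1) * √X) := by ring

section PrimeSet

open UniqueFactorizationMonoid

attribute [local instance] UniqueFactorizationMonoid.strongNormalizationMonoid

/-- Representatives, one from each class of associates, of the Gaussian primes dividing `m`. -/
noncomputable def primeSet (m : ℕ) : Finset GaussianInt := primeFactors (m : GaussianInt)

theorem prime_of_mem_primeSet {m : ℕ} {p : GaussianInt} (hp : p ∈ primeSet m) : Prime p :=
  prime_of_normalized_factor p (mem_primeFactors.1 hp)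

theorem dvd_of_mem_primeSet {m : ℕ} {p : GaussianInt} (hp : p ∈ primeSet m) :
    p ∣ (m : GaussianInt) :=
  dvd_of_mem_normalizedFactors (mem_primeFactors.1 hp)

theorem eq_of_associated_of_mem_primeSet {m n : ℕ} {p q : GaussianInt} (hp : p ∈ primeSet m)
    (hq : q ∈ primeSet n) (h : Associated p q) : p = q := by
  have hpq := normalize_eq_normalize_iff_associated.2 h
  rwa [normalize_normalized_factor p (mem_primeFactors.1 hp),
    normalize_normalized_factor q (mem_primeFactors.1 hq)] at hpq

theorem exists_mem_primeSet_associated {m : ℕ} (hm : m ≠ 0) {p : GaussianInt} (hp : Prime p)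
    (h : p ∣ (m : GaussianInt)) : ∃ q ∈ primeSet m, Associated p q := by
  obtain ⟨q, hq, hpq⟩ :=
    exists_mem_normalizedFactors_of_dvd (Nat.cast_ne_zero.2 hm) hp.irreducible h
  exact ⟨q, mem_primeFactors.2 hq, hpq⟩

theorem primeSet_subset_of_dvd {m n : ℕ} (hn : n ≠ 0) (h : m ∣ n) : primeSet m ⊆ primeSet n := by
  intro p hp
  obtain ⟨q, hq, hpq⟩ := exists_mem_primeSet_associated hn (prime_of_mem_primeSet hp)
    ((dvd_of_mem_primeSet hp).trans (Nat.cast_dvd_cast h))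
  rwa [eq_of_associated_of_mem_primeSet hp hq hpq]

theorem prod_norm_primeSet_dvd_sq (m : ℕ) : ∏ p ∈ primeSet m, p.norm ∣ (m : ℤ) ^ 2 := by
  have hdvd : ∏ p ∈ primeSet m, p ∣ (m : GaussianInt) := radical_dvd_self
  have h := map_dvd (Zsqrtd.normMonoidHom (d := -1)) hdvd
  rw [map_prod] at h
  simpa [Zsqrtd.normMonoidHom, sq] using h

end PrimeSet

theorem norm_ne_one_of_prime {p : GaussianInt} (hp : Prime p) : p.norm ≠ 1 := fun h =>
  hp.not_isUnit ((Zsqrtd.norm_eq_one_iff' (by norm_num) p).1 h)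

theorem two_le_norm_of_prime {p : GaussianInt} (hp : Prime p) : 2 ≤ p.norm := by
  have := GaussianInt.norm_pos.2 hp.ne_zero
  have := norm_ne_one_of_prime hp
  omega

theorem card_primeSet_le_two {p : ℕ} (hp : p.Prime) : (primeSet p).card ≤ 2 := by
  have hdvd (q) (hq : q ∈ primeSet p) : (p : ℤ) ∣ q.norm := by
    have hnorm : q.norm.natAbs ∣ p ^ 2 := by
      obtain ⟨c, hc⟩ := dvd_of_mem_primeSet hq
      have h := congrArg Zsqrtd.norm hc
      rw [Zsqrtd.norm_natCast, Zsqrtd.norm_mul] at h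
      exact Int.natCast_dvd_natCast.1
        (Int.natAbs_dvd.2 ⟨c.norm, by push_cast; rw [← h, sq]⟩)
    obtain ⟨k, -, hk⟩ := (Nat.dvd_prime_pow hp).1 hnorm
    have hk0 : k ≠ 0 := fun h0 => by
      have := two_le_norm_of_prime (prime_of_mem_primeSet hq)
      rw [h0, pow_zero] at hk
      omega
    exact Int.natCast_dvd.2 (hk ▸ dvd_pow_self p hk0)
  have hpow : p ^ (primeSet p).card ∣ p ^ 2 := by
    refine Int.natCast_dvd_natCast.1 ?_
    push_cast
    refine dvd_trans ?_ (prod_norm_primeSet_dvd_sq p)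
    rw [← Finset.prod_const]
    exact Finset.prod_dvd_prod_of_dvd _ _ hdvd
  exact (Nat.pow_dvd_pow_iff_le_right hp.one_lt).1 hpow

theorem exists_mem_primeFactors_dvd {m : ℕ} (hm : m ≠ 0) {q : GaussianInt} (hq : Prime q)
    (h : q ∣ (m : GaussianInt)) : ∃ p ∈ m.primeFactors, q ∣ (p : GaussianInt) := by
  have hfact : ∏ p ∈ m.primeFactors, p ^ m.factorization p = m :=
    Nat.prod_factorization_pow_eq_self hm
  rw [← hfact, Nat.cast_prod] at h
  obtain ⟨p, hp, hqp⟩ := hq.exists_mem_finset_dvd h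
  rw [Nat.cast_pow] at hqp
  exact ⟨p, hp, hq.dvd_of_dvd_pow hqp⟩

theorem card_primeSet_le {m : ℕ} (hm : m ≠ 0) :
    (primeSet m).card ≤ 2 * m.primeFactors.card := by
  classical
  have hsub : primeSet m ⊆ m.primeFactors.biUnion primeSet := by
    intro q hq
    have hqprime := prime_of_mem_primeSet hq
    obtain ⟨p, hp, hqp⟩ := exists_mem_primeFactors_dvd hm hqprime (dvd_of_mem_primeSet hq)
    obtain ⟨q', hq', h⟩ :=
      exists_mem_primeSet_associated (Nat.prime_of_mem_primeFactors hp).ne_zero hqprime hqp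
    rw [eq_of_associated_of_mem_primeSet hq hq' h]
    exact Finset.mem_biUnion.2 ⟨p, hp, hq'⟩
  rw [mul_comm]
  exact (Finset.card_le_card hsub).trans (Finset.card_biUnion_le_card_mul _ _ _ fun p hp =>
    card_primeSet_le_two (Nat.prime_of_mem_primeFactors hp))

theorem two_pow_card_primeFactors_le {m : ℕ} (hm : m ≠ 0) :
    2 ^ m.primeFactors.card ≤ m.divisors.card := by
  rw [Nat.card_divisors hm]
  refine Finset.pow_card_le_prod _ _ _ fun p hp => Nat.succ_le_succ ?_
  exact Nat.pos_of_ne_zero (Finsupp.mem_support_iff.1 hp)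

theorem two_pow_card_primeSet_le {m : ℕ} (hm : m ≠ 0) :
    2 ^ (primeSet m).card ≤ m.divisors.card ^ 2 :=
  calc 2 ^ (primeSet m).card ≤ 2 ^ (2 * m.primeFactors.card) :=
        Nat.pow_le_pow_right two_pos (card_primeSet_le hm)
    _ = (2 ^ m.primeFactors.card) ^ 2 := by rw [mul_comm, pow_mul]
    _ ≤ m.divisors.card ^ 2 := Nat.pow_le_pow_left (two_pow_card_primeFactors_le hm) 2

theorem card_divisors_mul_le (m n : ℕ) :
    (m * n).divisors.card ≤ m.divisors.card * n.divisors.card := by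
  open scoped Pointwise in
  rw [Nat.divisors_mul]
  exact Finset.card_mul_le

theorem exists_add_one_le_mul_pow {a : ℝ} (ha : 1 < a) :
    ∃ M : ℝ, 1 ≤ M ∧ ∀ k : ℕ, (k : ℝ) + 1 ≤ M * a ^ k := by
  have ha' : 0 < a - 1 := sub_pos.2 ha
  refine ⟨1 + 1 / (a - 1), by linarith [one_div_pos.2 ha'], fun k => ?_⟩
  calc (k : ℝ) + 1 ≤ (1 + 1 / (a - 1)) * (1 + k * (a - 1)) := by
        have hexpand : (1 + 1 / (a - 1)) * (1 + k * (a - 1)) =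
            k + 1 + (1 / (a - 1) + k * (a - 1)) := by
          field_simp
          ring
        rw [hexpand]
        exact le_add_of_nonneg_right (by positivity)
    _ ≤ (1 + 1 / (a - 1)) * a ^ k := by
        gcongr
        simpa using one_add_mul_le_pow (by linarith : -2 ≤ a - 1) k

theorem natCast_rpow_eq_prod {n : ℕ} (hn : n ≠ 0) (ε : ℝ) :
    (n : ℝ) ^ ε = ∏ p ∈ n.primeFactors, ((p : ℝ) ^ ε) ^ n.factorization p := by
  conv_lhs => rw [← Nat.prod_factorization_pow_eq_self hn]
  rw [Finsupp.prod, Nat.support_factorization, Nat.cast_prod,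
    ← Real.finsetProd_rpow _ _ fun _ _ => by positivity]
  exact Finset.prod_congr rfl fun p _ => by
    rw [Nat.cast_pow, Real.rpow_pow_comm p.cast_nonneg]

theorem exists_card_divisors_le {ε : ℝ} (hε : 0 < ε) :
    ∃ K : ℝ, ∀ n : ℕ, n ≠ 0 → (n.divisors.card : ℝ) ≤ K * (n : ℝ) ^ ε := by
  obtain ⟨B, hB⟩ : ∃ B : ℕ, ∀ p : ℕ, B ≤ p → (2 : ℝ) ≤ (p : ℝ) ^ ε :=
    Filter.eventually_atTop.1 <| ((tendsto_rpow_atTop hε).comp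
      tendsto_natCast_atTop_atTop).eventually_ge_atTop 2
  obtain ⟨M, hM, hMk⟩ := exists_add_one_le_mul_pow (Real.one_lt_rpow one_lt_two hε)
  have hfactor {p : ℕ} (hp : 2 ≤ p) (k : ℕ) :
      (k : ℝ) + 1 ≤ (if p < B then M else 1) * ((p : ℝ) ^ ε) ^ k := by
    split_ifs with hpB
    · calc (k : ℝ) + 1 ≤ M * ((2 : ℝ) ^ ε) ^ k := hMk k
        _ ≤ M * ((p : ℝ) ^ ε) ^ k := by gcongr; exact_mod_cast hp
    · calc (k : ℝ) + 1 ≤ 2 ^ k := by exact_mod_cast Nat.lt_two_pow_self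
        _ ≤ 1 * ((p : ℝ) ^ ε) ^ k := by rw [one_mul]; gcongr; exact hB p (not_lt.1 hpB)
  refine ⟨M ^ B, fun n hn => ?_⟩
  rw [Nat.card_divisors hn, natCast_rpow_eq_prod hn]
  push_cast
  calc ∏ p ∈ n.primeFactors, ((n.factorization p : ℝ) + 1)
      ≤ ∏ p ∈ n.primeFactors, ((if p < B then M else 1) *
          ((p : ℝ) ^ ε) ^ n.factorization p) :=
        Finset.prod_le_prod (fun _ _ => by positivity) fun p hp =>
          hfactor (Nat.prime_of_mem_primeFactors hp).two_le _
    _ = M ^ (n.primeFactors.filter (· < B)).card *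
          ∏ p ∈ n.primeFactors, ((p : ℝ) ^ ε) ^ n.factorization p := by
        rw [Finset.prod_mul_distrib, Finset.prod_ite, Finset.prod_const, Finset.prod_const_one,
          mul_one]
    _ ≤ M ^ B * ∏ p ∈ n.primeFactors, ((p : ℝ) ^ ε) ^ n.factorization p := by
        gcongr
        refine (Finset.card_le_card fun p hp => ?_).trans (Finset.card_range B).le
        exact Finset.mem_range.2 (Finset.mem_filter.1 hp).2

/-! ### The lattices attached to residues modulo `n` -/

theorem norm_eq (v : GaussianInt) : v.norm = v.re ^ 2 + v.im ^ 2 := by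
  rw [Zsqrtd.norm_def]
  ring

theorem intCast_norm_eq_mul_star (v : GaussianInt) : (v.norm : GaussianInt) = v * star v :=
  Zsqrtd.norm_eq_mul_conj v

theorem natCast_dvd_iff {n : ℕ} {v : GaussianInt} :
    (n : GaussianInt) ∣ v ↔ (n : ℤ) ∣ v.re ∧ (n : ℤ) ∣ v.im := by
  simpa using Zsqrtd.intCast_dvd (d := -1) (n : ℤ) v

theorem isCoprime_norm_iff {w : GaussianInt} {m : ℕ} :
    IsCoprime w.norm (m : ℤ) ↔ IsCoprime w (m : GaussianInt) := by
  constructor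
  · rintro ⟨a, b, hab⟩
    have h := congrArg (Int.cast : ℤ → GaussianInt) hab
    push_cast at h
    exact ⟨a * star w, b, by rw [← h, intCast_norm_eq_mul_star]; ring⟩
  · intro h
    have hstar : IsCoprime (star w) (m : GaussianInt) := by
      have hmap := h.map (starRingEnd GaussianInt)
      rwa [map_natCast] at hmap
    obtain ⟨a, b, hab⟩ := intCast_norm_eq_mul_star w ▸ h.mul_left hstar
    refine ⟨a.re, b.re, ?_⟩
    simpa [Zsqrtd.re_mul] using congrArg Zsqrtd.re hab

theorem isCoprime_natCast_iff {w : GaussianInt} {m : ℕ} (hm : m ≠ 0) :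
    IsCoprime w (m : GaussianInt) ↔ ∀ p ∈ primeSet m, ¬ p ∣ w := by
  constructor
  · exact fun h p hp hpw =>
      (prime_of_mem_primeSet hp).not_isUnit (h.isUnit_of_dvd' hpw (dvd_of_mem_primeSet hp))
  · refine fun h => isCoprime_of_prime_dvd (fun h0 => hm (Nat.cast_eq_zero.1 h0.2))
      fun q hq hqw hqm => ?_
    obtain ⟨p, hp, hqp⟩ := exists_mem_primeSet_associated hm hq hqm
    exact h p hp (hqp.dvd_iff_dvd_left.1 hqw)

theorem exists_natCast_dvd_sub_isCoprime {m n : ℕ} (hn : n ≠ 0) {w : GaussianInt}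
    (hw : IsCoprime w (m : GaussianInt)) :
    ∃ g : GaussianInt, (m : GaussianInt) ∣ g - w ∧ IsCoprime g (n : GaussianInt) := by
  -- `k` is the product of the primes dividing `n` but not `m`; we solve `g ≡ w [m]`, `g ≡ 1 [k]`.
  let k : ℕ := ∏ p ∈ n.primeFactors with ¬ p ∣ m, p
  have hmk : IsCoprime (m : GaussianInt) (k : GaussianInt) := by
    have hcoprime : m.Coprime k := Nat.Coprime.prod_right fun p hp => by
      rw [Finset.mem_filter] at hp
      exact ((Nat.Prime.coprime_iff_not_dvd (Nat.prime_of_mem_primeFactors hp.1)).2 hp.2).symm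
    exact_mod_cast hcoprime.cast (R := GaussianInt)
  obtain ⟨a, b, hab⟩ := id hmk
  have hgk : w + m * (a * (1 - w)) = 1 + k * (b * (w - 1)) := by
    linear_combination (1 - w) * hab
  refine ⟨w + m * (a * (1 - w)), ⟨a * (1 - w), by ring⟩, ?_⟩
  have hgmk : IsCoprime (w + m * (a * (1 - w))) (m * k : GaussianInt) :=
    (IsCoprime.add_mul_left_left_iff.2 hw).mul_right
      (hgk ▸ IsCoprime.add_mul_left_left_iff.2 isCoprime_one_left)
  refine isCoprime_of_prime_dvd (fun h0 => hn (Nat.cast_eq_zero.1 h0.2)) fun q hq hqg hqn =>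
    hq.not_isUnit (hgmk.isUnit_of_dvd' hqg ?_)
  obtain ⟨p, hp, hqp⟩ := exists_mem_primeFactors_dvd hn hq hqn
  by_cases hpm : p ∣ m
  · exact (hqp.trans (Nat.cast_dvd_cast hpm)).mul_right _
  · exact (hqp.trans (Nat.cast_dvd_cast
      (Finset.dvd_prod_of_mem _ (Finset.mem_filter.2 ⟨hp, hpm⟩)))).mul_left _

/-- The residue of a Gaussian integer in `ℤ[i] / n`, given by its coordinates. -/
def residue (n : ℕ) (v : GaussianInt) : ZMod n × ZMod n := (v.re, v.im)

theorem residue_surjective (n : ℕ) : Function.Surjective (residue n) := by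
  rintro ⟨x, y⟩
  obtain ⟨x, rfl⟩ := ZMod.intCast_surjective x
  obtain ⟨y, rfl⟩ := ZMod.intCast_surjective y
  exact ⟨⟨x, y⟩, rfl⟩

theorem residue_eq_iff {n : ℕ} {v w : GaussianInt} :
    residue n v = residue n w ↔ (n : GaussianInt) ∣ v - w := by
  rw [residue, residue, Prod.mk.injEq, eq_comm, ZMod.intCast_eq_intCast_iff_dvd_sub, eq_comm,
    ZMod.intCast_eq_intCast_iff_dvd_sub, natCast_dvd_iff, Zsqrtd.re_sub, Zsqrtd.im_sub]

open scoped Classical in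
/-- The invertible elements of `ℤ[i] / n`, as pairs of coordinates. -/
noncomputable def gaussUnits (n : ℕ) [NeZero n] : Finset (ZMod n × ZMod n) :=
  {u | IsUnit (u.1 ^ 2 + u.2 ^ 2)}

theorem mem_gaussUnits {n : ℕ} [NeZero n] {u : ZMod n × ZMod n} :
    u ∈ gaussUnits n ↔ IsUnit (u.1 ^ 2 + u.2 ^ 2) := by
  simp [gaussUnits]

theorem residue_mem_gaussUnits_iff {n : ℕ} [NeZero n] {g : GaussianInt} :
    residue n g ∈ gaussUnits n ↔ IsCoprime g (n : GaussianInt) := by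
  rw [mem_gaussUnits, ← isCoprime_norm_iff, isCoprime_comm, ← ZMod.coe_int_isUnit_iff_isCoprime,
    norm_eq]
  push_cast
  rfl

/-- The lattice of Gaussian integers whose residue modulo `n` is parallel to `u`: those `v` for
which `v * star u` has imaginary part divisible by `n`. -/
def lattice {n : ℕ} (u : ZMod n × ZMod n) : AddSubgroup GaussianInt where
  carrier := {v | (v.im : ZMod n) * u.1 = v.re * u.2}
  add_mem' {v w} hv hw := by
    simp only [Set.mem_ofPred_eq, Zsqrtd.re_add, Zsqrtd.im_add, Int.cast_add, add_mul] at hv hw ⊢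
    rw [hv, hw]
  zero_mem' := by simp
  neg_mem' {v} hv := by
    simp only [Set.mem_ofPred_eq, Zsqrtd.re_neg, Zsqrtd.im_neg, Int.cast_neg, neg_mul] at hv ⊢
    rw [hv]

theorem mem_lattice {n : ℕ} {u : ZMod n × ZMod n} {v : GaussianInt} :
    v ∈ lattice u ↔ (v.im : ZMod n) * u.1 = v.re * u.2 := Iff.rfl

theorem mem_lattice_iff_exists {n : ℕ} [NeZero n] {u : ZMod n × ZMod n} (hu : u ∈ gaussUnits n)
    {v : GaussianInt} : v ∈ lattice u ↔ ∃ t : ZMod n, residue n v = t • u := by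
  obtain ⟨i, hi⟩ := (mem_gaussUnits.1 hu).exists_right_inv
  simp only [mem_lattice, residue, Prod.ext_iff, Prod.smul_fst, Prod.smul_snd, smul_eq_mul]
  constructor
  · intro h
    refine ⟨i * (v.re * u.1 + v.im * u.2), ?_, ?_⟩
    · linear_combination -(v.re : ZMod n) * hi - i * u.2 * h
    · linear_combination -(v.im : ZMod n) * hi + i * u.1 * h
  · rintro ⟨t, hre, him⟩
    rw [hre, him]
    ring

open scoped Classical in
/-- The number of invertible residues `u` modulo `n` whose lattice contains `v`. -/
noncomputable def weight (n : ℕ) [NeZero n] (v : GaussianInt) : ℕ :=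
  ((gaussUnits n).filter fun u => v ∈ lattice u).card

theorem weight_congr {n : ℕ} [NeZero n] {v w : GaussianInt} (h : (n : GaussianInt) ∣ v - w) :
    weight n v = weight n w := by
  obtain ⟨hre, him⟩ := Prod.ext_iff.1 (residue_eq_iff.2 h)
  dsimp only [residue] at hre him
  simp only [weight, mem_lattice, hre, him]

theorem weight_le_weight_mul {n : ℕ} [NeZero n] (v : GaussianInt) {g : GaussianInt}
    (hg : IsCoprime g (n : GaussianInt)) : weight n v ≤ weight n (v * g) := by
  classical
  let mulG (u : ZMod n × ZMod n) : ZMod n × ZMod n :=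
    (u.1 * g.re - u.2 * g.im, u.1 * g.im + u.2 * g.re)
  have hunit : IsUnit ((g.re : ZMod n) ^ 2 + (g.im : ZMod n) ^ 2) :=
    mem_gaussUnits.1 (residue_mem_gaussUnits_iff.2 hg)
  refine Finset.card_le_card_of_injOn mulG (fun u hu => ?_) (Function.Injective.injOn ?_)
  · rw [Finset.mem_coe, Finset.mem_filter, mem_gaussUnits, mem_lattice] at hu ⊢
    refine ⟨?_, ?_⟩
    · convert hu.1.mul hunit using 1
      ring
    · simp only [mulG, Zsqrtd.re_mul, Zsqrtd.im_mul]
      push_cast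
      linear_combination ((g.re : ZMod n) ^ 2 + (g.im : ZMod n) ^ 2) * hu.2
  · intro x y hxy
    obtain ⟨h1, h2⟩ := Prod.ext_iff.1 hxy
    dsimp only [mulG] at h1 h2
    refine Prod.ext (hunit.mul_left_cancel ?_) (hunit.mul_left_cancel ?_)
    · linear_combination (g.re : ZMod n) * h1 + (g.im : ZMod n) * h2
    · linear_combination (g.re : ZMod n) * h2 - (g.im : ZMod n) * h1

theorem weight_mul_of_isCoprime {n : ℕ} [NeZero n] (v : GaussianInt) {g : GaussianInt}
    (hg : IsCoprime g (n : GaussianInt)) : weight n (v * g) = weight n v := by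
  refine le_antisymm ?_ (weight_le_weight_mul v hg)
  obtain ⟨a, b, hab⟩ := id hg
  calc weight n (v * g) ≤ weight n (v * g * a) :=
        weight_le_weight_mul _ ⟨g, b, by linear_combination hab⟩
    _ = weight n v := weight_congr ⟨-(v * b), by linear_combination v * hab⟩

theorem weight_natCast_mul {d m : ℕ} [NeZero (d * m)] {w : GaussianInt}
    (hw : IsCoprime w (m : GaussianInt)) : weight (d * m) (d * w) = weight (d * m) d := by
  obtain ⟨g, ⟨z, hz⟩, hg⟩ := exists_natCast_dvd_sub_isCoprime (NeZero.ne (d * m)) hw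
  rw [← weight_mul_of_isCoprime (d : GaussianInt) hg]
  refine weight_congr ⟨-z, ?_⟩
  push_cast
  linear_combination -(d : GaussianInt) * hz

theorem weight_natCast_le (n : ℕ) [NeZero n] {d : ℕ} (hd : 0 < d) : weight n d ≤ n * d := by
  classical
  calc weight n d
    _ ≤ ((Finset.univ : Finset (ZMod n)) ×ˢ ({y | d • y = 0} : Finset (ZMod n))).card := by
        refine Finset.card_le_card fun u hu => ?_
        have h := (Finset.mem_filter.1 hu).2
        simpa [mem_lattice, eq_comm] using h
    _ ≤ n * d := by
        rw [Finset.card_product, Finset.card_univ, ZMod.card]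
        exact Nat.mul_le_mul_left n (IsAddCyclic.card_nsmul_eq_zero_le hd)

/-- The largest divisor of `m` which divides the Gaussian integer `w`. -/
def content (m : ℕ) (w : GaussianInt) : ℕ := Nat.gcd (Int.gcd w.re w.im) m

theorem dvd_content_iff {m e : ℕ} {w : GaussianInt} :
    e ∣ content m w ↔ (e : GaussianInt) ∣ w ∧ e ∣ m := by
  rw [content, Nat.dvd_gcd_iff, natCast_dvd_iff, ← Int.dvd_coe_gcd_iff, Int.natCast_dvd_natCast]

theorem content_natCast_mul (d m : ℕ) (w : GaussianInt) :
    content (d * m) (d * w) = d * content m w := by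
  simp [content, Zsqrtd.re_mul, Zsqrtd.im_mul, Int.gcd_mul_left, Nat.gcd_mul_left]

theorem content_eq_one_of_isCoprime {m : ℕ} {w : GaussianInt}
    (h : IsCoprime w (m : GaussianInt)) : content m w = 1 := by
  obtain ⟨hw, hm⟩ := dvd_content_iff.1 (dvd_refl (content m w))
  have hunit := (h.isUnit_of_dvd' hw (Nat.cast_dvd_cast hm)).dvd (a := 1)
  exact Nat.dvd_one.1 (Int.natCast_dvd_natCast.1 (natCast_dvd_iff.1 hunit).1)

theorem isCoprime_of_content_eq_one {m : ℕ} {w g : GaussianInt} (hw : content m w = 1)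
    (hg : IsCoprime (m : ℤ) g.norm) (h : (m : ℤ) ∣ w.im * g.re - w.re * g.im) :
    IsCoprime w (m : GaussianInt) := by
  -- `w * star g` is congruent to its real part modulo `m`, so a common divisor of that real part
  -- and `m` divides `w * g.norm`, hence divides `w`.
  have hre : IsCoprime (w.re * g.re + w.im * g.im) (m : ℤ) := by
    rw [Int.isCoprime_iff_gcd_eq_one, ← Nat.dvd_one, ← hw, dvd_content_iff, natCast_dvd_iff]
    set e := Int.gcd (w.re * g.re + w.im * g.im) m
    have hem : (e : ℤ) ∣ m := Int.gcd_dvd_right _ _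
    have he : (e : ℤ) ∣ w.re * g.re + w.im * g.im := Int.gcd_dvd_left _ _
    have hcop := hg.of_isCoprime_of_dvd_left hem
    refine ⟨⟨hcop.dvd_of_dvd_mul_right ?_, hcop.dvd_of_dvd_mul_right ?_⟩,
      Int.natCast_dvd_natCast.1 hem⟩
    · convert (he.mul_right g.re).sub ((hem.trans h).mul_right g.im) using 1
      rw [norm_eq]
      ring
    · convert (he.mul_right g.im).add ((hem.trans h).mul_right g.re) using 1
      rw [norm_eq]
      ring
  obtain ⟨k, hk⟩ := h
  have hmul : w * star g =
      (w.re * g.re + w.im * g.im : ℤ) + (m : GaussianInt) * (k * ⟨0, 1⟩) := by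
    ext
    · simp
    · simp only [Zsqrtd.im_mul, Zsqrtd.im_star, Zsqrtd.re_star, Zsqrtd.im_add, Zsqrtd.re_intCast,
        Zsqrtd.im_intCast, Zsqrtd.re_natCast, Zsqrtd.im_natCast]
      linarith
  have hcop := hre.map (Int.castRingHom GaussianInt)
  simp only [eq_intCast, Int.cast_natCast] at hcop
  rw [← IsCoprime.add_mul_left_left_iff, ← hmul] at hcop
  exact hcop.of_mul_left_left

theorem isCoprime_of_weight_ne_zero {d m : ℕ} [NeZero (d * m)] {w : GaussianInt}
    (hw : content m w = 1) (h : weight (d * m) (d * w) ≠ 0) :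
    IsCoprime w (m : GaussianInt) := by
  classical
  obtain ⟨u, hu⟩ := Finset.card_ne_zero.1 h
  obtain ⟨g, rfl⟩ := residue_surjective _ u
  obtain ⟨hg, hwg⟩ := Finset.mem_filter.1 hu
  have hd : (d : ℤ) ≠ 0 := Nat.cast_ne_zero.2 (left_ne_zero_of_mul (NeZero.ne (d * m)))
  refine isCoprime_of_content_eq_one hw ((isCoprime_norm_iff.2
    (residue_mem_gaussUnits_iff.1 hg)).symm.of_isCoprime_of_dvd_left (by simp)) ?_
  have hcast := mem_lattice.1 hwg
  simp only [residue, Zsqrtd.re_mul, Zsqrtd.im_mul, Zsqrtd.re_natCast, Zsqrtd.im_natCast,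
    zero_mul, mul_zero, add_zero] at hcast
  rw [eq_comm] at hcast
  norm_cast at hcast
  rw [ZMod.intCast_eq_intCast_iff_dvd_sub] at hcast
  refine Int.dvd_of_mul_dvd_mul_left hd ?_
  convert hcast using 1
  · push_cast
    ring
  · ring

/-- The number of pairs of an invertible residue modulo `n` and a nonzero vector of norm at most `X`
in its lattice. -/
noncomputable def latticeCount (n : ℕ) [NeZero n] (X : ℝ) : ℕ := ∑ v ∈ disc X, weight n v

theorem sum_weight_content_eq (d m : ℕ) [NeZero (d * m)] (X : ℝ) :
    ∑ v ∈ disc X with content (d * m) v = d, weight (d * m) v =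
      weight (d * m) d * (sieved (primeSet m) (X / (d : ℝ) ^ 2)).card := by
  classical
  have hd : d ≠ 0 := left_ne_zero_of_mul (NeZero.ne (d * m))
  have hm : m ≠ 0 := right_ne_zero_of_mul (NeZero.ne (d * m))
  have hdG : (d : GaussianInt) ≠ 0 := Nat.cast_ne_zero.2 hd
  have hsieved : ∀ w : GaussianInt, w ∈ sieved (primeSet m) (X / (d : ℝ) ^ 2) ↔
      d * w ∈ disc X ∧ IsCoprime w (m : GaussianInt) := fun w => by
    rw [mem_sieved, ← mem_disc, isCoprime_natCast_iff hm, mul_mem_disc_iff hdG,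
      Zsqrtd.norm_natCast]
    push_cast
    rw [← sq]
  have hcontent : ∀ w : GaussianInt, content (d * m) (d * w) = d ↔ content m w = 1 := fun w => by
    rw [content_natCast_mul, Nat.mul_eq_left hd]
  calc ∑ v ∈ disc X with content (d * m) v = d, weight (d * m) v
      = ∑ v ∈ (sieved (primeSet m) (X / (d : ℝ) ^ 2)).image fun w => (d : GaussianInt) * w,
          weight (d * m) v := by
        refine (Finset.sum_subset (fun v hv => ?_) fun v hv hv' => ?_).symm
        · obtain ⟨w, hw, rfl⟩ := Finset.mem_image.1 hv
          obtain ⟨hwX, hcop⟩ := (hsieved w).1 hw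
          exact Finset.mem_filter.2 ⟨hwX, (hcontent w).2 (content_eq_one_of_isCoprime hcop)⟩
        · obtain ⟨hvX, hvd⟩ := Finset.mem_filter.1 hv
          obtain ⟨w, rfl⟩ := (dvd_content_iff.1 hvd.symm.dvd).1
          by_contra hweight
          exact hv' (Finset.mem_image_of_mem _ ((hsieved w).2
            ⟨hvX, isCoprime_of_weight_ne_zero ((hcontent w).1 hvd) hweight⟩))
    _ = ∑ w ∈ sieved (primeSet m) (X / (d : ℝ) ^ 2), weight (d * m) (d * w) :=
        Finset.sum_image fun x _ y _ h => mul_left_cancel₀ hdG h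
    _ = weight (d * m) d * (sieved (primeSet m) (X / (d : ℝ) ^ 2)).card := by
        rw [Finset.sum_congr rfl fun w hw => weight_natCast_mul ((hsieved w).1 hw).2,
          Finset.sum_const, smul_eq_mul, mul_comm]

theorem latticeCount_eq (n : ℕ) [NeZero n] (X : ℝ) :
    latticeCount n X =
      ∑ d ∈ n.divisors, weight n d * (sieved (primeSet (n / d)) (X / (d : ℝ) ^ 2)).card := by
  rw [latticeCount, ← Finset.sum_fiberwise_of_maps_to (g := content n) (t := n.divisors)
    (fun v _ => Nat.mem_divisors.2 ⟨Nat.gcd_dvd_right _ _, NeZero.ne n⟩)]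
  refine Finset.sum_congr rfl fun d hd => ?_
  obtain ⟨m, rfl⟩ := Nat.dvd_of_mem_divisors hd
  rw [Nat.mul_div_cancel_left m (Nat.pos_of_mem_divisors hd), sum_weight_content_eq]

open Filter in
theorem tendsto_div_of_abs_sub_le {f : ℝ → ℝ} {K C : ℝ}
    (h : ∀ X : ℝ, 1 ≤ X → |f X - K * X| ≤ C * √X) :
    Tendsto (fun X => f X / X) atTop (nhds K) := by
  rw [tendsto_iff_norm_sub_tendsto_zero]
  refine squeeze_zero' (Eventually.of_forall fun _ => norm_nonneg _) (g := fun X => C / √X) ?_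
    (Real.tendsto_sqrt_atTop.const_div_atTop C)
  filter_upwards [eventually_ge_atTop 1] with X hX
  have hX0 : 0 < X := by linarith
  rw [Real.norm_eq_abs, show f X / X - K = (f X - K * X) / X by field_simp, abs_div,
    abs_of_pos hX0, div_le_div_iff₀ hX0 (Real.sqrt_pos.2 hX0)]
  calc |f X - K * X| * √X ≤ C * √X * √X := by gcongr; exact h X hX
    _ = C * X := by rw [mul_assoc, Real.mul_self_sqrt hX0.le]

open scoped Classical in
/-- The number of nonzero Gaussian integers of norm at most `X` in a residue class modulo `n`. -/
noncomputable def residueCount (n : ℕ) (r : ZMod n × ZMod n) (X : ℝ) : ℕ :=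
  ((disc X).filter fun v => residue n v = r).card

theorem card_filter_residue_eq (n : ℕ) [NeZero n] (g : GaussianInt) (ρ : ℝ) :
    ((latticePoints 0 ρ).filter fun v => residue n v = residue n g).card =
      (latticePoints (-((g : ℂ) / n)) (ρ / n)).card := by
  have hn : (0 : ℝ) < n := Nat.cast_pos.2 (NeZero.pos n)
  have hnC : (n : ℂ) ≠ 0 := Nat.cast_ne_zero.2 (NeZero.ne n)
  have hnorm : ∀ w : GaussianInt, ‖((g + n * w : GaussianInt) : ℂ)‖ ≤ ρ ↔
      ‖(w : ℂ) - -((g : ℂ) / n)‖ ≤ ρ / n := fun w => by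
    have hfactor : ((g + n * w : GaussianInt) : ℂ) = n * ((w : ℂ) - -((g : ℂ) / n)) := by
      simp only [map_add, map_mul, map_natCast]
      field_simp
      ring
    rw [hfactor, norm_mul, Complex.norm_natCast, le_div_iff₀' hn]
  refine (Finset.card_bij (fun w _ => g + n * w) (fun w hw => ?_) (fun a _ b _ h => ?_)
    fun v hv => ?_).symm
  · rw [mem_latticePoints] at hw
    rw [Finset.mem_filter, mem_latticePoints, sub_zero, hnorm, residue_eq_iff]
    exact ⟨hw, ⟨w, by ring⟩⟩
  · exact mul_left_cancel₀ (Nat.cast_ne_zero.2 (NeZero.ne n)) (add_left_cancel h)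
  · rw [Finset.mem_filter, mem_latticePoints, sub_zero, residue_eq_iff] at hv
    obtain ⟨hv, w, hw⟩ := hv
    obtain rfl : g + n * w = v := by rw [← hw]; ring
    exact ⟨w, mem_latticePoints.2 ((hnorm w).1 hv), rfl⟩

theorem abs_residueCount_sub_le (n : ℕ) [NeZero n] (r : ZMod n × ZMod n) {X : ℝ} (hX : 1 ≤ X) :
    |(residueCount n r X : ℝ) - Real.pi / (n : ℝ) ^ 2 * X| ≤ (1 + 8 * Real.pi) * √X := by
  classical
  obtain ⟨g, rfl⟩ := residue_surjective n r
  have hX0 : 0 ≤ X := by linarith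
  have hsqrt : 1 ≤ √X := Real.one_le_sqrt.2 hX
  have hcount := card_filter_residue_eq n g (√X)
  rw [latticePoints_zero_sqrt hX0] at hcount
  have hinsert : |(residueCount n (residue n g) X : ℝ) -
      (latticePoints (-((g : ℂ) / n)) (√X / n)).card| ≤ 1 := by
    have hle : residueCount n (residue n g) X ≤
        ((insert 0 (disc X)).filter fun v => residue n v = residue n g).card :=
      Finset.card_le_card (Finset.filter_subset_filter _ (Finset.subset_insert _ _))
    have hge : ((insert 0 (disc X)).filter fun v => residue n v = residue n g).card ≤
        residueCount n (residue n g) X + 1 := by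
      rw [Finset.filter_insert]
      split_ifs
      · exact Finset.card_insert_le _ _
      · exact Nat.le_succ _
    rw [hcount] at hle hge
    rw [abs_le]
    constructor
    · linarith [(by exact_mod_cast hge : ((latticePoints (-((g : ℂ) / n)) (√X / n)).card : ℝ) ≤
        residueCount n (residue n g) X + 1)]
    · linarith [(Nat.cast_le (α := ℝ)).2 hle]
  have hpoints := abs_card_latticePoints_sub_le (-((g : ℂ) / n)) (ρ := √X / n) (by positivity)
  rw [div_pow, Real.sq_sqrt hX0] at hpoints
  have hdiv : √X / n ≤ √X := div_le_self (by linarith) (Nat.one_le_cast.2 (NeZero.pos n))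
  calc |(residueCount n (residue n g) X : ℝ) - Real.pi / (n : ℝ) ^ 2 * X|
      ≤ 1 + 4 * Real.pi * (√X / n + 1) := by
        rw [div_mul_eq_mul_div, ← mul_div_assoc'] 
        exact (abs_sub_le _ _ _).trans (add_le_add hinsert hpoints)
    _ ≤ √X + 4 * Real.pi * (√X + √X) := by gcongr
    _ = (1 + 8 * Real.pi) * √X := by ring

theorem tendsto_residueCount (n : ℕ) [NeZero n] (r : ZMod n × ZMod n) :
    Filter.Tendsto (fun X => (residueCount n r X : ℝ) / X) Filter.atTop
      (nhds (Real.pi / (n : ℝ) ^ 2)) :=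
  tendsto_div_of_abs_sub_le fun _ hX => abs_residueCount_sub_le n r hX

open scoped Classical in
/-- The number of nonzero vectors of norm at most `X` in the lattice of `u`. -/
noncomputable def lineCount {n : ℕ} (u : ZMod n × ZMod n) (X : ℝ) : ℕ :=
  ((disc X).filter fun v => v ∈ lattice u).card

theorem lineCount_eq {n : ℕ} [NeZero n] {u : ZMod n × ZMod n} (hu : u ∈ gaussUnits n) (X : ℝ) :
    lineCount u X = ∑ t : ZMod n, residueCount n (t • u) X := by
  classical
  obtain ⟨i, hi⟩ := (mem_gaussUnits.1 hu).exists_right_inv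
  have hinj : Function.Injective fun t : ZMod n => t • u := fun s t hst => by
    obtain ⟨h1, h2⟩ := Prod.ext_iff.1 hst
    simp only [Prod.smul_fst, Prod.smul_snd, smul_eq_mul] at h1 h2
    linear_combination (t - s) * hi + i * u.1 * h1 + i * u.2 * h2
  have hunion : (disc X).filter (fun v => v ∈ lattice u) =
      Finset.univ.biUnion fun t : ZMod n => (disc X).filter fun v => residue n v = t • u := by
    ext v
    simp [mem_lattice_iff_exists hu]
  rw [lineCount, hunion, Finset.card_biUnion fun s _ t _ hst => ?_]
  · rfl
  · exact Finset.disjoint_filter.2 fun v _ hs ht => hst (hinj (hs.symm.trans ht))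

theorem latticeCount_eq_sum_lineCount (n : ℕ) [NeZero n] (X : ℝ) :
    latticeCount n X = ∑ u ∈ gaussUnits n, lineCount u X := by
  classical
  exact Finset.sum_card_bipartiteAbove_eq_sum_card_bipartiteBelow fun v u => v ∈ lattice u

theorem tendsto_latticeCount (n : ℕ) [NeZero n] :
    Filter.Tendsto (fun X => (latticeCount n X : ℝ) / X) Filter.atTop
      (nhds (Real.pi * (gaussUnits n).card / n)) := by
  have hn : (n : ℝ) ≠ 0 := Nat.cast_ne_zero.2 (NeZero.ne n)
  have hsum : ∀ X : ℝ, (latticeCount n X : ℝ) / X =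
      ∑ u ∈ gaussUnits n, ∑ t : ZMod n, (residueCount n (t • u) X : ℝ) / X := fun X => by
    rw [latticeCount_eq_sum_lineCount, Nat.cast_sum, Finset.sum_div]
    refine Finset.sum_congr rfl fun u hu => ?_
    rw [lineCount_eq hu, Nat.cast_sum, Finset.sum_div]
  simp only [hsum]
  convert tendsto_finsetSum (gaussUnits n) fun u _ => tendsto_finsetSum Finset.univ
    fun (t : ZMod n) _ => tendsto_residueCount n (t • u) using 2
  rw [Finset.sum_const, Finset.sum_const, Finset.card_univ, ZMod.card, nsmul_eq_mul, nsmul_eq_mul]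
  field_simp

theorem abs_weight_mul_card_sieved_sub_le {n d : ℕ} [NeZero n] (hd : d ∣ n) {X : ℝ} (hX : 0 ≤ X) :
    |((weight n d * (sieved (primeSet (n / d)) (X / (d : ℝ) ^ 2)).card : ℕ) : ℝ) -
        weight n d * (Real.pi / (d : ℝ) ^ 2 *
          ∏ p ∈ primeSet (n / d), (1 - 1 / (p.norm : ℝ))) * X| ≤
      (8 * Real.pi + 1) * n * 2 ^ (primeSet n).card * √X := by
  have hd0 : 0 < d := Nat.pos_of_dvd_of_pos hd (NeZero.pos n)
  have hdR : (0 : ℝ) < d := Nat.cast_pos.2 hd0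
  have hsieve := abs_card_sieved_sub_le (primeSet (n / d)) (fun _ => prime_of_mem_primeSet)
    (fun _ hp _ hq => eq_of_associated_of_mem_primeSet hp hq) (X := X / (d : ℝ) ^ 2) (by positivity)
  rw [Real.sqrt_div hX, Real.sqrt_sq hdR.le] at hsieve
  set M := ∏ p ∈ primeSet (n / d), (1 - 1 / (p.norm : ℝ))
  calc |((weight n d * (sieved (primeSet (n / d)) (X / (d : ℝ) ^ 2)).card : ℕ) : ℝ) -
        weight n d * (Real.pi / (d : ℝ) ^ 2 * M) * X|
      = weight n d * |((sieved (primeSet (n / d)) (X / (d : ℝ) ^ 2)).card : ℝ) -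
          Real.pi * (X / (d : ℝ) ^ 2) * M| := by
        rw [← Nat.abs_cast (weight n d), ← abs_mul, Nat.abs_cast]
        congr 1
        push_cast
        ring
    _ ≤ (n * d) * (2 ^ (primeSet n).card * ((8 * Real.pi + 1) * (√X / d))) := by
        have hweight : (weight n d : ℝ) ≤ n * d := by exact_mod_cast weight_natCast_le n hd0
        refine mul_le_mul hweight (hsieve.trans ?_) (abs_nonneg _) (by positivity)
        gcongr
        · norm_num
        · exact primeSet_subset_of_dvd (NeZero.ne n) (Nat.div_dvd_of_dvd hd)
    _ = (8 * Real.pi + 1) * n * 2 ^ (primeSet n).card * √X := by field_simp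

-- The main term of the divisor sum need not be evaluated: it is pinned down by the limit of
-- `latticeCount n X / X`, which the residue classes compute.
theorem abs_latticeCount_sub_le (n : ℕ) [NeZero n] {X : ℝ} (hX : 0 ≤ X) :
    |(latticeCount n X : ℝ) - Real.pi * (gaussUnits n).card / n * X| ≤
      (8 * Real.pi + 1) * n * n.divisors.card ^ 3 * √X := by
  set K : ℝ := ∑ d ∈ n.divisors, weight n d *
    (Real.pi / (d : ℝ) ^ 2 * ∏ p ∈ primeSet (n / d), (1 - 1 / (p.norm : ℝ))) with hK
  have hsum : ∀ X : ℝ, 0 ≤ X → |(latticeCount n X : ℝ) - K * X| ≤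
      (8 * Real.pi + 1) * n * n.divisors.card ^ 3 * √X := fun X hX => by
    rw [latticeCount_eq, hK, Finset.sum_mul, Nat.cast_sum, ← Finset.sum_sub_distrib]
    calc _ ≤ ∑ d ∈ n.divisors, (8 * Real.pi + 1) * n * 2 ^ (primeSet n).card * √X :=
          (Finset.abs_sum_le_sum_abs _ _).trans (Finset.sum_le_sum fun d hd =>
            abs_weight_mul_card_sieved_sub_le (Nat.dvd_of_mem_divisors hd) hX)
      _ = (8 * Real.pi + 1) * n * (n.divisors.card * 2 ^ (primeSet n).card) * √X := by
          rw [Finset.sum_const, nsmul_eq_mul]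
          ring
      _ ≤ (8 * Real.pi + 1) * n * (n.divisors.card * n.divisors.card ^ 2) * √X := by
          gcongr
          exact_mod_cast two_pow_card_primeSet_le (NeZero.ne n)
      _ = (8 * Real.pi + 1) * n * n.divisors.card ^ 3 * √X := by ring
  have hlim := tendsto_div_of_abs_sub_le fun X (hX : (1 : ℝ) ≤ X) => hsum X (by linarith)
  rw [tendsto_nhds_unique (tendsto_latticeCount n) hlim]
  exact hsum X hX

theorem card_sieved_primeSet (n : ℕ) [NeZero n] (X : ℝ) :
    (sieved (primeSet n) X).card = ∑ u ∈ gaussUnits n, residueCount n u X := by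
  classical
  have hfilter : sieved (primeSet n) X = (disc X).filter fun v => residue n v ∈ gaussUnits n := by
    ext v
    rw [mem_sieved, ← mem_disc, Finset.mem_filter, residue_mem_gaussUnits_iff,
      isCoprime_natCast_iff (NeZero.ne n)]
  rw [hfilter, Finset.card_eq_sum_card_fiberwise (f := residue n) (t := gaussUnits n)
    fun v hv => Finset.mem_coe.2 (Finset.mem_filter.1 (Finset.mem_coe.1 hv)).2]
  refine Finset.sum_congr rfl fun u hu => ?_
  rw [residueCount, Finset.filter_filter]
  exact congrArg _ (Finset.filter_congr fun v _ => and_iff_right_of_imp fun h => h ▸ hu)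

theorem card_gaussUnits (n : ℕ) [NeZero n] :
    ((gaussUnits n).card : ℝ) = (n : ℝ) ^ 2 * ∏ p ∈ primeSet n, (1 - 1 / (p.norm : ℝ)) := by
  have hresidue : Filter.Tendsto (fun X => ((sieved (primeSet n) X).card : ℝ) / X) Filter.atTop
      (nhds ((gaussUnits n).card * (Real.pi / (n : ℝ) ^ 2))) := by
    simp only [card_sieved_primeSet, Nat.cast_sum, Finset.sum_div]
    convert tendsto_finsetSum (gaussUnits n) fun u _ => tendsto_residueCount n u using 2
    rw [Finset.sum_const, nsmul_eq_mul]
  have hsieve := tendsto_div_of_abs_sub_le fun X (hX : (1 : ℝ) ≤ X) => by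
    have h := abs_card_sieved_sub_le (primeSet n) (fun _ => prime_of_mem_primeSet)
      (fun _ hp _ hq => eq_of_associated_of_mem_primeSet hp hq) (zero_le_one.trans hX)
    rwa [mul_right_comm, ← mul_assoc] at h
  have heq := tendsto_nhds_unique hresidue hsieve
  have hn : (n : ℝ) ≠ 0 := Nat.cast_ne_zero.2 (NeZero.ne n)
  have hpi := Real.pi_ne_zero
  field_simp at heq
  exact heq

theorem sq_le_card_gaussUnits_mul (n : ℕ) [NeZero n] :
    (n : ℝ) ^ 2 ≤ (gaussUnits n).card * (n.divisors.card : ℝ) ^ 2 := by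
  have hprod : (1 / 2 : ℝ) ^ (primeSet n).card ≤ ∏ p ∈ primeSet n, (1 - 1 / (p.norm : ℝ)) := by
    rw [← Finset.prod_const]
    refine Finset.prod_le_prod (fun _ _ => by norm_num) fun p hp => ?_
    have hnorm : (2 : ℝ) ≤ p.norm := by
      exact_mod_cast two_le_norm_of_prime (prime_of_mem_primeSet hp)
    linarith [one_div_le_one_div_of_le two_pos hnorm]
  calc (n : ℝ) ^ 2 = (n : ℝ) ^ 2 * (1 / 2 : ℝ) ^ (primeSet n).card * 2 ^ (primeSet n).card := by
        rw [mul_assoc, ← mul_pow]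
        norm_num
    _ ≤ (n : ℝ) ^ 2 * (∏ p ∈ primeSet n, (1 - 1 / (p.norm : ℝ))) * (n.divisors.card : ℝ) ^ 2 := by
        have hpow : (2 : ℝ) ^ (primeSet n).card ≤ (n.divisors.card : ℝ) ^ 2 := by
          exact_mod_cast two_pow_card_primeSet_le (NeZero.ne n)
        have hpos := le_trans (by positivity) hprod
        gcongr
    _ = (gaussUnits n).card * (n.divisors.card : ℝ) ^ 2 := by rw [card_gaussUnits]

theorem natCast_dvd_im_mul_star {n : ℕ} [NeZero n] {u : ZMod n × ZMod n} (hu : u ∈ gaussUnits n)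
    {v w : GaussianInt} (hv : v ∈ lattice u) (hw : w ∈ lattice u) :
    (n : ℤ) ∣ (w * star v).im := by
  rw [mem_lattice] at hv hw
  rw [← ZMod.intCast_zmod_eq_zero_iff_dvd, Zsqrtd.im_mul, Zsqrtd.re_star, Zsqrtd.im_star]
  refine (mem_gaussUnits.1 hu).mul_left_eq_zero.1 ?_
  push_cast
  linear_combination (v.re * u.1 + v.im * u.2 : ZMod n) * hw -
    (w.re * u.1 + w.im * u.2 : ZMod n) * hv

theorem natCast_dvd_of_I_mul_mem {n : ℕ} [NeZero n] {u : ZMod n × ZMod n}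
    (hu : u ∈ gaussUnits n) {v : GaussianInt} (hv : v ∈ lattice u)
    (hI : (⟨0, 1⟩ : GaussianInt) * v ∈ lattice u) : (n : GaussianInt) ∣ v := by
  have hunit := mem_gaussUnits.1 hu
  simp only [mem_lattice, Zsqrtd.re_mul, Zsqrtd.im_mul] at hv hI
  push_cast at hI
  simp only [natCast_dvd_iff, ← ZMod.intCast_zmod_eq_zero_iff_dvd]
  constructor
  · refine hunit.mul_left_eq_zero.1 ?_
    linear_combination u.1 * hI - u.2 * hv
  · refine hunit.mul_left_eq_zero.1 ?_
    linear_combination u.2 * hI + u.1 * hv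

-- If two short vectors were independent, the Lagrange identity would force them to be orthogonal of
-- norm exactly `n`; then `w = ± i v`, the lattice contains `v` and `i v`, and so `n ∣ v`.
theorem im_mul_star_eq_zero {n : ℕ} [NeZero n] (hn : 2 ≤ n) {u : ZMod n × ZMod n}
    (hu : u ∈ gaussUnits n) {v w : GaussianInt} (hv : v ∈ lattice u) (hw : w ∈ lattice u)
    (hvn : v.norm ≤ n) (hwn : w.norm ≤ n) : (w * star v).im = 0 := by
  obtain ⟨k, hk⟩ := natCast_dvd_im_mul_star hu hv hw
  have hn0 : (0 : ℤ) < n := Nat.cast_pos.2 (NeZero.pos n)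
  have hle : w.norm * v.norm ≤ n * n := mul_le_mul hwn hvn (GaussianInt.norm_nonneg v) hn0.le
  have hlagrange : (w * star v).re ^ 2 + (n * k) ^ 2 = w.norm * v.norm := by
    rw [← hk, ← norm_eq, Zsqrtd.norm_mul, Zsqrtd.norm_conj]
  by_contra hne
  have hk0 : k ≠ 0 := fun h => hne (by rw [hk, h, mul_zero])
  have hk1 : 1 ≤ k ^ 2 := Int.add_one_le_iff.2 (sq_pos_of_ne_zero hk0)
  have hre : (w * star v).re = 0 := by nlinarith
  have hksq : k ^ 2 = 1 := by nlinarith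
  have hvN : v.norm = n := by nlinarith [GaussianInt.norm_nonneg v]
  have hwv : w * star v = n * k * ⟨0, 1⟩ := Zsqrtd.ext (by simp [hre]) (by simp [hk])
  have hIv : (⟨0, 1⟩ : GaussianInt) * v = k * w := by
    have hvv : v * star v = n := by rw [← intCast_norm_eq_mul_star, hvN, Int.cast_natCast]
    have hkk : (k : GaussianInt) ^ 2 = 1 := by exact_mod_cast hksq
    refine mul_left_cancel₀ (Nat.cast_ne_zero.2 (NeZero.ne n) : (n : GaussianInt) ≠ 0) ?_
    linear_combination -(n : GaussianInt) * ⟨0, 1⟩ * v * hkk - k * v * hwv + k * w * hvv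
  obtain ⟨z, rfl⟩ := natCast_dvd_of_I_mul_mem hu hv
    (by rw [hIv, ← zsmul_eq_mul]; exact (lattice u).zsmul_mem hw k)
  rw [Zsqrtd.norm_mul, Zsqrtd.norm_natCast, mul_assoc] at hvN
  have hunit := (mul_right_eq_self₀.1 hvN).resolve_right hn0.ne'
  have hz := Int.eq_one_or_neg_one_of_mul_eq_one hunit
  omega

open scoped Classical in
/-- The invertible residues modulo `n` whose lattice has a nonzero vector of norm at most `n`. -/
noncomputable def shortUnits (n : ℕ) [NeZero n] : Finset (ZMod n × ZMod n) :=
  (gaussUnits n).filter fun u => ∃ v ∈ lattice u, v ≠ 0 ∧ v.norm ≤ n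

theorem mem_shortUnits {n : ℕ} [NeZero n] {u : ZMod n × ZMod n} :
    u ∈ shortUnits n ↔ u ∈ gaussUnits n ∧ ∃ v ∈ lattice u, v ≠ 0 ∧ v.norm ≤ n := by
  simp [shortUnits]

theorem exists_norm_sub_intCast_mul_lt {v w : GaussianInt} (hv : v ≠ 0)
    (h : (w * star v).im = 0) : ∃ q : ℤ, (w - q * v).norm < v.norm := by
  have hnorm : 0 < v.norm := GaussianInt.norm_pos.2 hv
  set e := (w * star v).re with he
  have hreal : w * star v = (e : GaussianInt) := Zsqrtd.ext (by simp [he]) (by simp [h])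
  refine ⟨e / v.norm, ?_⟩
  have hremainder : (w - (e / v.norm : ℤ) * v) * v.norm = (e % v.norm : ℤ) * v := by
    rw [Int.emod_def]
    push_cast
    rw [intCast_norm_eq_mul_star, ← hreal]
    ring
  have hsq : (w - (e / v.norm : ℤ) * v).norm * v.norm = (e % v.norm) ^ 2 := by
    refine mul_right_cancel₀ hnorm.ne' ?_
    have hnorms := congrArg Zsqrtd.norm hremainder
    rw [Zsqrtd.norm_mul, Zsqrtd.norm_mul, Zsqrtd.norm_intCast, Zsqrtd.norm_intCast] at hnorms
    linear_combination hnorms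
  have hnonneg := Int.emod_nonneg e hnorm.ne'
  have hlt := Int.emod_lt_of_pos e hnorm
  nlinarith

theorem exists_generator_of_mem_shortUnits {n : ℕ} [NeZero n] (hn : 2 ≤ n)
    {u : ZMod n × ZMod n} (hu : u ∈ shortUnits n) :
    ∃ v ∈ lattice u, v ≠ 0 ∧ v.norm ≤ n ∧
      ∀ w ∈ lattice u, w.norm ≤ n → ∃ j : ℤ, w = j * v := by
  obtain ⟨hu, hex⟩ := mem_shortUnits.1 hu
  obtain ⟨v, ⟨hv, hv0, hvn⟩, hmin⟩ := WellFounded.has_min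
    (measure fun v : GaussianInt => v.norm.natAbs).wf
    {v : GaussianInt | v ∈ lattice u ∧ v ≠ 0 ∧ v.norm ≤ n} hex
  refine ⟨v, hv, hv0, hvn, fun w hw hwn => ?_⟩
  obtain ⟨q, hq⟩ := exists_norm_sub_intCast_mul_lt hv0 (im_mul_star_eq_zero hn hu hv hw hvn hwn)
  refine ⟨q, sub_eq_zero.1 ?_⟩
  by_contra hne
  have hmem : w - q * v ∈ lattice u :=
    (lattice u).sub_mem hw (zsmul_eq_mul v q ▸ (lattice u).zsmul_mem hv q)
  refine hmin _ ⟨hmem, hne, hq.le.trans hvn⟩ ?_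
  exact Int.natAbs_lt_natAbs_of_nonneg_of_lt (GaussianInt.norm_nonneg _) hq

theorem lineCount_eq_two_mul_floor {n : ℕ} {u : ZMod n × ZMod n} {v : GaussianInt} (hv0 : v ≠ 0)
    (hv : v ∈ lattice u) {X : ℝ} (hX : 0 ≤ X)
    (hgen : ∀ w ∈ lattice u, (w.norm : ℝ) ≤ X → ∃ j : ℤ, w = j * v) :
    lineCount u X = 2 * ⌊√(X / v.norm)⌋₊ := by
  classical
  have hnorm : (0 : ℝ) < v.norm := Int.cast_pos.2 (GaussianInt.norm_pos.2 hv0)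
  have hle : ∀ j : ℤ, ((j * v : GaussianInt).norm : ℝ) ≤ X ↔ j.natAbs ≤ ⌊√(X / v.norm)⌋₊ :=
    fun j => by
      rw [Nat.le_floor_iff (Real.sqrt_nonneg _), Real.le_sqrt (Nat.cast_nonneg _),
        le_div_iff₀ hnorm, Zsqrtd.norm_mul, Zsqrtd.norm_intCast, Nat.cast_natAbs]
      · push_cast
        rw [sq_abs, sq]
      · positivity
  have hfilter : (disc X).filter (fun w => w ∈ lattice u) =
      ((Finset.Icc (-(⌊√(X / v.norm)⌋₊ : ℤ)) ⌊√(X / v.norm)⌋₊).erase 0).image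
        fun j : ℤ => (j : GaussianInt) * v := by
    ext w
    simp only [Finset.mem_filter, mem_disc, Finset.mem_image, Finset.mem_erase, Finset.mem_Icc]
    constructor
    · rintro ⟨⟨hw0, hwX⟩, hw⟩
      obtain ⟨j, rfl⟩ := hgen w hw hwX
      have hj := (hle j).1 hwX
      exact ⟨j, ⟨fun h => hw0 (by rw [h, Int.cast_zero, zero_mul]), by omega, by omega⟩, rfl⟩
    · rintro ⟨j, ⟨hj0, hj⟩, rfl⟩
      exact ⟨⟨mul_ne_zero (Int.cast_ne_zero.2 hj0) hv0, (hle j).2 (by omega)⟩,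
        zsmul_eq_mul v j ▸ (lattice u).zsmul_mem hv j⟩
  rw [lineCount, hfilter, Finset.card_image_of_injective _ fun a b h =>
    Int.cast_injective (mul_right_cancel₀ hv0 h), Finset.card_erase_of_mem
    (Finset.mem_Icc.2 (by omega)), Int.card_Icc]
  omega

open ArithmeticFunction in
theorem sum_moebius_mul_div {M n : ℕ} (hM : 0 < M) (hMn : M ≤ n) :
    ∑ k ∈ Finset.Ioc 0 n, moebius k * ((M / k : ℕ) : ℤ) = 1 := by
  rw [← Finset.sum_subset (Finset.Ioc_subset_Ioc_right hMn) fun k hk hk' => ?_,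
    ← sum_Ioc_mul_zeta_eq_sum, moebius_mul_coe_zeta, Finset.sum_eq_single_of_mem 1
      (Finset.mem_Ioc.2 ⟨one_pos, hM⟩) fun b _ => ArithmeticFunction.one_apply_ne, one_one]
  rw [Finset.mem_Ioc] at hk hk'
  rw [Nat.div_eq_of_lt (by omega), Nat.cast_zero, mul_zero]

open ArithmeticFunction in
theorem sum_moebius_mul_lineCount {n : ℕ} [NeZero n] (hn : 2 ≤ n) {u : ZMod n × ZMod n}
    (hu : u ∈ gaussUnits n) [Decidable (u ∈ shortUnits n)] :
    ∑ k ∈ Finset.Ioc 0 n, moebius k * (lineCount u (n / (k : ℝ) ^ 2) : ℤ) =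
      if u ∈ shortUnits n then 2 else 0 := by
  classical
  have hle : ∀ k ∈ Finset.Ioc 0 n, (n : ℝ) / (k : ℝ) ^ 2 ≤ n := fun k hk =>
    div_le_self (Nat.cast_nonneg n) (one_le_pow₀ (Nat.one_le_cast.2 (Finset.mem_Ioc.1 hk).1))
  split_ifs with hshort
  · obtain ⟨v, hv, hv0, hvn, hgen⟩ := exists_generator_of_mem_shortUnits hn hshort
    have hnorm : (1 : ℝ) ≤ v.norm := one_le_norm hv0
    set M := ⌊√(n / v.norm)⌋₊ with hM
    have hcount : ∀ k ∈ Finset.Ioc 0 n, lineCount u (n / (k : ℝ) ^ 2) = 2 * (M / k) :=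
      fun k hk => by
        rw [lineCount_eq_two_mul_floor hv0 hv (by positivity) fun w hw hwk =>
          hgen w hw (by exact_mod_cast hwk.trans (hle k hk)), div_right_comm,
          Real.sqrt_div (by positivity), Real.sqrt_sq (Nat.cast_nonneg k), Nat.floor_div_natCast]
    have hM0 : 0 < M := by
      rw [hM, Nat.floor_pos, Real.one_le_sqrt, one_le_div (by linarith)]
      exact_mod_cast hvn
    have hMn : M ≤ n := Nat.floor_le_of_le <| Real.sqrt_le_iff.2 ⟨Nat.cast_nonneg n,
      (div_le_self (Nat.cast_nonneg n) hnorm).trans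
        (by exact_mod_cast Nat.le_self_pow two_ne_zero n)⟩
    rw [← mul_one (2 : ℤ), ← sum_moebius_mul_div hM0 hMn, Finset.mul_sum]
    refine Finset.sum_congr rfl fun k hk => ?_
    rw [hcount k hk]
    push_cast
    ring
  · refine Finset.sum_eq_zero fun k hk => ?_
    have hcount : lineCount u (n / (k : ℝ) ^ 2) = 0 := by
      rw [lineCount, Finset.card_eq_zero, Finset.filter_eq_empty_iff]
      intro v hv hvu
      obtain ⟨hv0, hvk⟩ := mem_disc.1 hv
      exact hshort (mem_shortUnits.2 ⟨hu, v, hvu, hv0, by exact_mod_cast hvk.trans (hle k hk)⟩)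
    rw [hcount, Nat.cast_zero, mul_zero]

open ArithmeticFunction in
theorem two_mul_card_shortUnits {n : ℕ} [NeZero n] (hn : 2 ≤ n) :
    2 * ((shortUnits n).card : ℝ) =
      ∑ k ∈ Finset.Ioc 0 n, (moebius k : ℝ) * latticeCount n (n / (k : ℝ) ^ 2) := by
  classical
  have hint : 2 * ((shortUnits n).card : ℤ) =
      ∑ k ∈ Finset.Ioc 0 n, moebius k * (latticeCount n (n / (k : ℝ) ^ 2) : ℤ) := by
    simp only [latticeCount_eq_sum_lineCount, Nat.cast_sum, Finset.mul_sum]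
    rw [Finset.sum_comm, Finset.sum_congr rfl fun u hu => sum_moebius_mul_lineCount hn hu,
      ← Finset.sum_filter, Finset.sum_const, nsmul_eq_mul, mul_comm, Finset.filter_mem_eq_inter,
      Finset.inter_eq_right.2 fun u hu => (mem_shortUnits.1 hu).1]
  exact_mod_cast hint

open ArithmeticFunction in
theorem abs_two_mul_card_shortUnits_sub_le {n : ℕ} [NeZero n] (hn : 2 ≤ n) :
    |2 * ((shortUnits n).card : ℝ) -
        Real.pi * (gaussUnits n).card * ∑ k ∈ Finset.Ioc 0 n, (moebius k : ℝ) / (k : ℝ) ^ 2| ≤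
      (8 * Real.pi + 1) * n * n.divisors.card ^ 3 * √n * (1 + Real.log n) := by
  have hn0 : (n : ℝ) ≠ 0 := Nat.cast_ne_zero.2 (NeZero.ne n)
  set B := (8 * Real.pi + 1) * n * n.divisors.card ^ 3 * √n with hB
  have hterm : ∀ k ∈ Finset.Ioc 0 n, |(moebius k : ℝ) * latticeCount n (n / (k : ℝ) ^ 2) -
      Real.pi * (gaussUnits n).card * ((moebius k : ℝ) / (k : ℝ) ^ 2)| ≤ B * (k : ℝ)⁻¹ := by
    intro k hk
    have hk0 : (0 : ℝ) < k := Nat.cast_pos.2 (Finset.mem_Ioc.1 hk).1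
    have hcount := abs_latticeCount_sub_le n (X := n / (k : ℝ) ^ 2) (by positivity)
    rw [Real.sqrt_div (Nat.cast_nonneg n), Real.sqrt_sq hk0.le] at hcount
    calc _ = |(moebius k : ℝ)| * |(latticeCount n (n / (k : ℝ) ^ 2) : ℝ) -
          Real.pi * (gaussUnits n).card / n * (n / (k : ℝ) ^ 2)| := by
          rw [← abs_mul]
          congr 1
          field_simp
      _ ≤ 1 * ((8 * Real.pi + 1) * n * n.divisors.card ^ 3 * (√n / k)) := by
          gcongr
          exact_mod_cast abs_moebius_le_one
      _ = B * (k : ℝ)⁻¹ := by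
          rw [hB]
          ring
  have hharmonic : ∑ k ∈ Finset.Ioc 0 n, (k : ℝ)⁻¹ ≤ 1 + Real.log n := by
    have h := harmonic_le_one_add_log n
    rw [harmonic_eq_sum_Icc] at h
    push_cast at h
    exact h
  rw [two_mul_card_shortUnits hn, Finset.mul_sum, ← Finset.sum_sub_distrib]
  calc _ ≤ ∑ k ∈ Finset.Ioc 0 n, B * (k : ℝ)⁻¹ :=
        (Finset.abs_sum_le_sum_abs _ _).trans (Finset.sum_le_sum hterm)
    _ ≤ B * (1 + Real.log n) := by
        rw [← Finset.mul_sum]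
        exact mul_le_mul_of_nonneg_left hharmonic (by positivity)

open ArithmeticFunction in
theorem hasSum_moebius_div_sq :
    HasSum (fun k : ℕ => (moebius k : ℝ) / (k : ℝ) ^ 2) (6 / Real.pi ^ 2) := by
  have hre : 1 < (2 : ℂ).re := by norm_num
  have hpi : (Real.pi : ℂ) ≠ 0 := Complex.ofReal_ne_zero.2 Real.pi_ne_zero
  have hvalue : LSeries (fun k => (moebius k : ℂ)) 2 = 6 / (Real.pi : ℂ) ^ 2 := by
    have h := LSeries_zeta_mul_Lseries_moebius hre
    rw [LSeries_zeta_eq_riemannZeta hre, riemannZeta_two] at h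
    field_simp at h ⊢
    linear_combination h
  rw [← Complex.hasSum_ofReal]
  push_cast
  rw [← hvalue]
  refine (LSeriesSummable_moebius_iff.2 hre).hasSum.congr_fun fun k => ?_
  rw [LSeries.term_of_ne_zero' two_ne_zero]
  norm_cast

open ArithmeticFunction in
theorem tendsto_sum_moebius_div_sq :
    Filter.Tendsto (fun n : ℕ => ∑ k ∈ Finset.Ioc 0 n, (moebius k : ℝ) / (k : ℝ) ^ 2) Filter.atTop
      (nhds (6 / Real.pi ^ 2)) := by
  have hrange : ∀ n : ℕ, Finset.Ioc 0 n = (Finset.range (n + 1)).erase 0 := fun n => by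
    ext k
    simp only [Finset.mem_Ioc, Finset.mem_erase, Finset.mem_range]
    omega
  simp only [hrange]
  refine ((Filter.tendsto_add_atTop_iff_nat 1).2
    hasSum_moebius_div_sq.tendsto_sum_nat).congr fun n => (Finset.sum_erase _ ?_).symm
  simp

/-! ### Reduction of forms -/

/-- The binary quadratic form `left x² + 2 mid x y + right y²`. -/
@[ext]
structure Form where
  left : ℤ
  mid : ℤ
  right : ℤ

namespace Form

/-- The value of a form at `(x, y)`. -/
def eval (f : Form) (x y : ℤ) : ℤ := f.left * x ^ 2 + 2 * f.mid * x * y + f.right * y ^ 2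

/-- The form `(x, y) ↦ f (a x + b y, c x + d y)`. -/
def subst (f : Form) (a b c d : ℤ) : Form :=
  ⟨f.eval a c, f.left * a * b + f.mid * (a * d + b * c) + f.right * c * d, f.eval b d⟩

/-- The form `(x, y) ↦ f (x, -y)`. -/
def neg (f : Form) : Form := ⟨f.left, -f.mid, f.right⟩

/-- A form is reduced if `|2 mid| ≤ left ≤ right`; the sign of `mid` is left free. -/
def IsReduced (f : Form) : Prop := |2 * f.mid| ≤ f.left ∧ f.left ≤ f.right

/-- A form is strictly reduced if it satisfies `|2 mid| < left < right`. -/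
def IsStrictlyReduced (f : Form) : Prop := |2 * f.mid| < f.left ∧ f.left < f.right

/-- The form is primitive, positive, and has determinant `n²`. -/
structure IsPrimitivePos (n : ℕ) (f : Form) : Prop where
  det : f.left * f.right - f.mid ^ 2 = (n : ℤ) ^ 2
  left_nonneg : 0 ≤ f.left
  right_nonneg : 0 ≤ f.right
  isUnit_of_dvd : ∀ k : ℤ, k ∣ f.left → k ∣ f.mid → k ∣ f.right → IsUnit k

protected theorem neg_neg (f : Form) : f.neg.neg = f := by
  simp only [neg, _root_.neg_neg]

theorem IsStrictlyReduced.isReduced {f : Form} (h : f.IsStrictlyReduced) : f.IsReduced :=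
  ⟨h.1.le, h.2.le⟩

theorem IsReduced.neg {f : Form} (h : f.IsReduced) : f.neg.IsReduced := by
  simpa only [IsReduced, Form.neg, mul_neg, abs_neg] using h

theorem IsStrictlyReduced.neg {f : Form} (h : f.IsStrictlyReduced) : f.neg.IsStrictlyReduced := by
  simpa only [IsStrictlyReduced, Form.neg, mul_neg, abs_neg] using h

theorem eval_one_zero (f : Form) : f.eval 1 0 = f.left := by
  rw [eval]
  ring

theorem eval_zero_one (f : Form) : f.eval 0 1 = f.right := by
  rw [eval]
  ring

theorem eval_subst (f : Form) (a b c d x y : ℤ) :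
    (f.subst a b c d).eval x y = f.eval (a * x + b * y) (c * x + d * y) := by
  simp only [eval, subst]
  ring

theorem subst_subst (f : Form) (a b c d a' b' c' d' : ℤ) :
    (f.subst a b c d).subst a' b' c' d' =
      f.subst (a * a' + b * c') (a * b' + b * d') (c * a' + d * c') (c * b' + d * d') := by
  ext <;> simp only [eval, subst] <;> ring

theorem subst_one (f : Form) : f.subst 1 0 0 1 = f := by
  ext <;> simp only [eval, subst] <;> ring

theorem subst_adjugate {f : Form} {a b c d : ℤ} (hdet : (a * d - b * c) ^ 2 = 1) :
    (f.subst a b c d).subst d (-b) (-c) a = f := by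
  rw [subst_subst]
  ext <;> simp only [eval, subst]
  · linear_combination f.left * hdet
  · linear_combination f.mid * hdet
  · linear_combination f.right * hdet

theorem subst_rot_add_rot_add_rot (f : Form) :
    ((((f.subst 0 1 (-1) 0).subst 1 1 0 1).subst 0 1 (-1) 0).subst 1 1 0 1).subst 0 1 (-1) 0 =
      f.subst 1 (-1) 0 1 := by
  simp only [subst_subst]
  ext <;> simp only [eval, subst] <;> ring

namespace IsPrimitivePos

variable {n : ℕ} {f : Form}

theorem left_mul_eval (h : f.IsPrimitivePos n) (x y : ℤ) :
    f.left * f.eval x y = (f.left * x + f.mid * y) ^ 2 + (n * y) ^ 2 := by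
  rw [eval]
  linear_combination y ^ 2 * h.det

theorem left_pos [NeZero n] (h : f.IsPrimitivePos n) : 0 < f.left := by
  have hn : 0 < (n : ℤ) ^ 2 := pow_pos (Nat.cast_pos.2 (NeZero.pos n)) 2
  refine h.left_nonneg.lt_of_ne' fun h0 => ?_
  have hdet := h.det
  rw [h0, zero_mul] at hdet
  linarith [sq_nonneg f.mid]

theorem eval_nonneg [NeZero n] (h : f.IsPrimitivePos n) (x y : ℤ) : 0 ≤ f.eval x y := by
  refine nonneg_of_mul_nonneg_right ?_ h.left_pos
  rw [h.left_mul_eval]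
  positivity

theorem subst [NeZero n] (h : f.IsPrimitivePos n) {a b c d : ℤ}
    (hdet : (a * d - b * c) ^ 2 = 1) : (f.subst a b c d).IsPrimitivePos n where
  det := by
    simp only [Form.subst, eval]
    linear_combination (a * d - b * c) ^ 2 * h.det + (n : ℤ) ^ 2 * hdet
  left_nonneg := h.eval_nonneg _ _
  right_nonneg := h.eval_nonneg _ _
  isUnit_of_dvd k hl hm hr := by
    have hdvd : ∀ x y z : ℤ, k ∣ (f.subst a b c d).left * x + (f.subst a b c d).mid * y +
        (f.subst a b c d).right * z := fun x y z =>
      dvd_add (dvd_add (hl.mul_right x) (hm.mul_right y)) (hr.mul_right z)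
    rw [← subst_adjugate (f := f) hdet] at h
    refine h.isUnit_of_dvd k ?_ ?_ ?_
    · convert hdvd (d ^ 2) (-2 * d * c) (c ^ 2) using 1
      simp only [Form.subst, eval]
      ring
    · convert hdvd (-d * b) (a * d + b * c) (-c * a) using 1
      simp only [Form.subst, eval]
      ring
    · convert hdvd (b ^ 2) (-2 * a * b) (a ^ 2) using 1
      simp only [Form.subst, eval]
      ring

theorem neg (h : f.IsPrimitivePos n) : f.neg.IsPrimitivePos n where
  det := by simpa only [Form.neg, neg_sq] using h.det
  left_nonneg := h.left_nonneg
  right_nonneg := h.right_nonneg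
  isUnit_of_dvd k hl hm hr := h.isUnit_of_dvd k hl ((dvd_neg).1 hm) hr

end IsPrimitivePos

theorem exists_isReduced {R : Form → Prop} (hpos : ∀ f, R f → 0 ≤ f.left ∧ 0 ≤ f.right)
    (hrot : ∀ f, R f → R (f.subst 0 1 (-1) 0)) (hadd : ∀ f, R f → R (f.subst 1 1 0 1))
    {f : Form} (h : R f) : ∃ g, R g ∧ g.IsReduced := by
  have hsub : ∀ f, R f → R (f.subst 1 (-1) 0 1) := fun f h =>
    subst_rot_add_rot_add_rot f ▸ hrot _ (hadd _ (hrot _ (hadd _ (hrot _ h))))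
  suffices H : ∀ (k : ℕ) (f : Form), f.left + f.right ≤ k → R f → ∃ g, R g ∧ g.IsReduced from
    H (f.left + f.right).toNat f (Int.self_le_toNat _) h
  intro k
  induction k using Nat.strong_induction_on with
  | _ k ih =>
    intro f hk h
    have hdescend : ∀ g, R g → g.left + g.right < f.left + f.right → ∃ g, R g ∧ g.IsReduced :=
      fun g hg hlt => by
        have := hpos g hg
        exact ih (g.left + g.right).toNat (by omega) g (by omega) hg
    wlog hlr : f.left ≤ f.right generalizing f
    · refine this _ ?_ (hrot f h) ?_ ?_ <;> simp only [subst, eval]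
      · linarith
      · intro g hg hlt
        exact hdescend g hg (by linarith)
      · linarith
    rcases lt_or_ge f.left (2 * f.mid) with hm | hm
    · refine hdescend _ (hsub f h) ?_
      simp only [subst, eval]
      linarith
    rcases lt_or_ge (2 * f.mid) (-f.left) with hm' | hm'
    · refine hdescend _ (hadd f h) ?_
      simp only [subst, eval]
      linarith
    · exact ⟨f, h, abs_le.2 ⟨hm', hm⟩, hlr⟩

namespace IsReduced

variable {f : Form} {x y : ℤ}

theorem left_nonneg (h : f.IsReduced) : 0 ≤ f.left := (abs_nonneg _).trans h.1

theorem right_le_eval (h : f.IsReduced) (hy : y ≠ 0) : f.right ≤ f.eval x y := by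
  have hcross : -(f.left * (|x| * |y|)) ≤ 2 * f.mid * x * y := by
    refine (abs_le.1 ?_).1
    rw [mul_assoc (2 * f.mid), abs_mul, abs_mul x]
    exact mul_le_mul_of_nonneg_right h.1 (by positivity)
  have hy1 : 1 ≤ |y| := Int.one_le_abs hy
  have hpos : 1 ≤ |x| ^ 2 - |x| * |y| + |y| ^ 2 := by
    by_contra hlt
    nlinarith [sq_nonneg (2 * |x| - |y|)]
  have hysq : 1 ≤ |y| ^ 2 := one_le_pow₀ hy1
  rw [eval, ← sq_abs x, ← sq_abs y]
  nlinarith [mul_le_mul_of_nonneg_left hpos h.left_nonneg,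
    mul_le_mul_of_nonneg_left hysq (sub_nonneg.2 h.2)]

theorem left_le_eval (h : f.IsReduced) (hxy : x ≠ 0 ∨ y ≠ 0) : f.left ≤ f.eval x y := by
  by_cases hy : y = 0
  · subst hy
    have hx : 0 < x ^ 2 := sq_pos_of_ne_zero (hxy.resolve_right (not_not.2 rfl))
    rw [eval]
    nlinarith [h.left_nonneg]
  · exact h.2.trans (h.right_le_eval hy)

theorem left_le_eval_subst (h : f.IsReduced) {a b c d : ℤ} (hdet : (a * d - b * c) ^ 2 = 1)
    (hxy : x ≠ 0 ∨ y ≠ 0) : f.left ≤ (f.subst a b c d).eval x y := by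
  rw [eval_subst]
  refine h.left_le_eval ?_
  by_contra! hne
  refine hxy.elim (fun hx => hx ?_) fun hy => hy ?_
  · linear_combination (a * d - b * c) * (d * hne.1 - b * hne.2) - x * hdet
  · linear_combination (a * d - b * c) * (a * hne.2 - c * hne.1) - y * hdet

end IsReduced

theorem IsStrictlyReduced.eq_zero_of_abs_add_lt {f : Form} (h : f.IsStrictlyReduced) {k : ℤ}
    (hk : |2 * (f.mid + k * f.left)| < f.left) : k = 0 := by
  have hm := abs_lt.1 h.1
  have hk := abs_lt.1 hk
  have h1 : k < 1 := by
    by_contra! hle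
    nlinarith
  have h2 : -1 < k := by
    by_contra! hle
    nlinarith
  omega

theorem subst_eq_of_isStrictlyReduced {f : Form} {a b c d : ℤ} (hf : f.IsStrictlyReduced)
    (hg : (f.subst a b c d).IsStrictlyReduced) (hdet : (a * d - b * c) ^ 2 = 1) :
    f.subst a b c d = ⟨f.left, (a * d - b * c) * f.mid, f.right⟩ := by
  have hle : (f.subst a b c d).left ≤ f.left := by
    have := hg.isReduced.left_le_eval_subst (a := d) (b := -b) (c := -c) (d := a)
      (by linear_combination hdet) (Or.inl one_ne_zero : (1 : ℤ) ≠ 0 ∨ (0 : ℤ) ≠ 0)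
    rwa [subst_adjugate hdet, eval_one_zero] at this
  have hc : c = 0 := by
    by_contra hc
    exact (hf.2.trans_le (hf.isReduced.right_le_eval hc)).not_ge hle
  subst hc
  have had : a * d * (a * d) = 1 := by linear_combination hdet
  have hd : d ^ 2 = 1 := by
    rcases Int.isUnit_iff.1 (IsUnit.of_mul_eq_one (a * (a * d)) (by linear_combination had) :
      IsUnit d) with rfl | rfl <;> norm_num
  have ha : a ^ 2 = 1 := by linear_combination had - a ^ 2 * hd
  have hb : b = 0 := by
    have hk : d * b = 0 := hf.eq_zero_of_abs_add_lt (lt_of_eq_of_lt ?_ (hg.1.trans_le hle))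
    · exact (mul_eq_zero.1 hk).resolve_left (by rintro rfl; norm_num at hd)
    · have hmid : 2 * (f.subst a b 0 d).mid = a * d * (2 * (f.mid + d * b * f.left)) := by
        simp only [subst]
        linear_combination -2 * f.left * a * b * hd
      rw [hmid, abs_mul (a * d), Int.isUnit_iff_abs_eq.1 (IsUnit.of_mul_eq_one _ had), one_mul]
  subst hb
  ext <;> simp only [eval, subst]
  · linear_combination f.left * ha
  · ring
  · linear_combination f.right * hd

end Form

open Form

theorem finite_setOf_isReduced (n : ℕ) [NeZero n] :
    {f : Form | f.IsPrimitivePos n ∧ f.IsReduced ∧ 0 ≤ f.mid}.Finite := by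
  refine Set.Finite.subset (((Set.finite_Icc 0 (2 * (n : ℤ) ^ 2)).prod
    ((Set.finite_Icc 0 (2 * (n : ℤ) ^ 2)).prod (Set.finite_Icc 0 (2 * (n : ℤ) ^ 2)))).image
      fun t : ℤ × ℤ × ℤ => (⟨t.1, t.2.1, t.2.2⟩ : Form)) ?_
  rintro f ⟨hf, ⟨hm, hlr⟩, h0⟩
  have hm := (abs_le.1 hm).2
  have hleft := hf.left_pos
  have hdet := hf.det
  have hright : f.right ≤ 2 * (n : ℤ) ^ 2 := by
    suffices 4 * f.mid ^ 2 ≤ f.left * f.right by nlinarith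
    nlinarith
  refine ⟨(f.left, f.mid, f.right), ?_, rfl⟩
  simp only [Set.mem_prod, Set.mem_Icc]
  refine ⟨⟨?_, ?_⟩, ⟨?_, ?_⟩, ?_, ?_⟩ <;> linarith

/-- The reduced primitive positive forms of determinant `n²` with nonnegative middle coefficient:
they meet every `GL₂(ℤ)`-class. -/
noncomputable def reducedForms (n : ℕ) [NeZero n] : Finset Form :=
  (finite_setOf_isReduced n).toFinset

open Classical in
/-- The strictly reduced members of `reducedForms n` with positive middle coefficient, which are
pairwise inequivalent. -/
noncomputable def interiorForms (n : ℕ) [NeZero n] : Finset Form :=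
  (reducedForms n).filter fun f => f.IsStrictlyReduced ∧ 0 < f.mid

section

variable {n : ℕ} [NeZero n] {f : Form}

theorem mem_reducedForms :
    f ∈ reducedForms n ↔ f.IsPrimitivePos n ∧ f.IsReduced ∧ 0 ≤ f.mid :=
  Set.Finite.mem_toFinset _

open Classical in
theorem mem_interiorForms :
    f ∈ interiorForms n ↔ f.IsPrimitivePos n ∧ f.IsStrictlyReduced ∧ 0 < f.mid := by
  rw [interiorForms, Finset.mem_filter, mem_reducedForms]
  exact ⟨fun h => ⟨h.1.1, h.2⟩, fun h => ⟨⟨h.1, h.2.1.isReduced, h.2.2.le⟩, h.2⟩⟩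

theorem interiorForms_subset : interiorForms n ⊆ reducedForms n := by
  classical exact Finset.filter_subset _ _

theorem card_le_card_divisors {α : Type*} {s : Finset α} {m : ℕ} (hm : m ≠ 0) (φ : α → ℤ)
    (hpos : ∀ t ∈ s, 0 < φ t) (hdvd : ∀ t ∈ s, φ t ∣ m) (hinj : Set.InjOn φ s) :
    s.card ≤ m.divisors.card := by
  refine Finset.card_le_card_of_injOn (fun t => (φ t).toNat) (fun t ht => ?_)
    fun t ht t' ht' h => hinj ht ht' ?_
  · rw [Finset.mem_coe, Nat.mem_divisors, ← Int.natCast_dvd_natCast,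
      Int.toNat_of_nonneg (hpos t ht).le]
    exact ⟨hdvd t ht, hm⟩
  · have := hpos t ht
    dsimp only at h
    omega

theorem four_mul_sq_ne_zero : 4 * n ^ 2 ≠ 0 :=
  mul_ne_zero four_ne_zero (pow_ne_zero 2 (NeZero.ne n))

theorem card_reducedForms_mid_eq_zero_le :
    ((reducedForms n).filter fun f => f.mid = 0).card ≤ (4 * n ^ 2).divisors.card := by
  refine card_le_card_divisors four_mul_sq_ne_zero left (fun f hf => ?_) (fun f hf => ?_)
    fun f hf g hg h => ?_
  · exact (mem_reducedForms.1 (Finset.mem_filter.1 hf).1).1.left_pos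
  · obtain ⟨hf, h0⟩ := Finset.mem_filter.1 hf
    have hdet := (mem_reducedForms.1 hf).1.det
    rw [h0] at hdet
    refine ⟨4 * f.right, ?_⟩
    push_cast
    linear_combination -4 * hdet
  · obtain ⟨hf, hf0⟩ := Finset.mem_filter.1 (Finset.mem_coe.1 hf)
    obtain ⟨hg, hg0⟩ := Finset.mem_filter.1 (Finset.mem_coe.1 hg)
    have hfd := (mem_reducedForms.1 hf).1
    have hgd := (mem_reducedForms.1 hg).1.det
    refine Form.ext h (hf0.trans hg0.symm) (mul_left_cancel₀ hfd.left_pos.ne' ?_)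
    have hfdet := hfd.det
    rw [← h, hg0] at hgd
    rw [hf0] at hfdet
    linarith

theorem card_reducedForms_two_mul_mid_eq_left_le :
    ((reducedForms n).filter fun f => 2 * f.mid = f.left).card ≤ (4 * n ^ 2).divisors.card := by
  refine card_le_card_divisors four_mul_sq_ne_zero left (fun f hf => ?_) (fun f hf => ?_)
    fun f hf g hg h => ?_
  · exact (mem_reducedForms.1 (Finset.mem_filter.1 hf).1).1.left_pos
  · obtain ⟨hf, h0⟩ := Finset.mem_filter.1 hf
    have hdet := (mem_reducedForms.1 hf).1.det
    rw [← h0] at hdet ⊢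
    refine ⟨4 * f.right - 2 * f.mid, ?_⟩
    push_cast
    linear_combination -4 * hdet
  · obtain ⟨hf, hf0⟩ := Finset.mem_filter.1 (Finset.mem_coe.1 hf)
    obtain ⟨hg, hg0⟩ := Finset.mem_filter.1 (Finset.mem_coe.1 hg)
    have hfd := (mem_reducedForms.1 hf).1
    have hgd := (mem_reducedForms.1 hg).1.det
    have hmid : f.mid = g.mid := by omega
    refine Form.ext h hmid (mul_left_cancel₀ hfd.left_pos.ne' ?_)
    have hfdet := hfd.det
    rw [← h, ← hmid] at hgd
    linarith

theorem card_reducedForms_left_eq_right_le :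
    ((reducedForms n).filter fun f => f.left = f.right).card ≤ (4 * n ^ 2).divisors.card := by
  have hpos : ∀ f ∈ (reducedForms n).filter fun f => f.left = f.right, 0 < f.left - f.mid := by
    intro f hf
    obtain ⟨hf, hr, -⟩ := mem_reducedForms.1 (Finset.mem_filter.1 hf).1
    have := hf.left_pos
    have := (abs_le.1 hr.1).2
    omega
  refine card_le_card_divisors four_mul_sq_ne_zero (fun f => f.left - f.mid) hpos
    (fun f hf => ?_) fun f hf g hg h => ?_
  · obtain ⟨hf, h0⟩ := Finset.mem_filter.1 hf
    have hdet := (mem_reducedForms.1 hf).1.det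
    rw [← h0] at hdet
    refine ⟨4 * (f.left + f.mid), ?_⟩
    push_cast
    linear_combination -4 * hdet
  · have hfg : f.left + f.mid = g.left + g.mid := by
      refine mul_left_cancel₀ (hpos f hf).ne' ?_
      obtain ⟨hf, hf0⟩ := Finset.mem_filter.1 (Finset.mem_coe.1 hf)
      obtain ⟨hg, hg0⟩ := Finset.mem_filter.1 (Finset.mem_coe.1 hg)
      have hfd := (mem_reducedForms.1 hf).1.det
      have hgd := (mem_reducedForms.1 hg).1.det
      rw [← hf0] at hfd
      rw [← hg0] at hgd
      linear_combination hfd - hgd - (g.left + g.mid) * h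
    have hf0 := (Finset.mem_filter.1 (Finset.mem_coe.1 hf)).2
    have hg0 := (Finset.mem_filter.1 (Finset.mem_coe.1 hg)).2
    ext <;> dsimp only at h <;> omega

open Classical in
theorem card_reducedForms_filter_le (P : Form → Prop) [DecidablePred P] :
    ((reducedForms n).filter P).card ≤
      ((interiorForms n).filter P).card + 3 * (4 * n ^ 2).divisors.card := by
  have hsub : (reducedForms n).filter P ⊆ (interiorForms n).filter P ∪
      ((reducedForms n).filter (fun f => f.mid = 0) ∪
        ((reducedForms n).filter (fun f => 2 * f.mid = f.left) ∪
          (reducedForms n).filter fun f => f.left = f.right)) := by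
    intro f hf
    obtain ⟨hf, hP⟩ := Finset.mem_filter.1 hf
    obtain ⟨hf', ⟨hm, hlr⟩, h0⟩ := mem_reducedForms.1 hf
    rw [abs_of_nonneg (by omega)] at hm
    simp only [Finset.mem_union, Finset.mem_filter, mem_interiorForms, IsStrictlyReduced,
      abs_of_nonneg (show 0 ≤ 2 * f.mid by omega), hf, hf', hP, true_and, and_true]
    omega
  calc _ ≤ _ := Finset.card_le_card hsub
    _ ≤ _ := Finset.card_union_le _ _
    _ ≤ _ := Nat.add_le_add_left ((Finset.card_union_le _ _).trans
      (Nat.add_le_add_left (Finset.card_union_le _ _) _)) _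
    _ ≤ _ := by
      linarith [card_reducedForms_mid_eq_zero_le (n := n),
        card_reducedForms_two_mul_mid_eq_left_le (n := n),
        card_reducedForms_left_eq_right_le (n := n)]

end

/-! ### Bases of the lattices -/

/-- The Gram form `(x, y) ↦ N (x v + y w)` of two Gaussian integers. -/
def gram (v w : GaussianInt) : Form := ⟨v.norm, (star v * w).re, w.norm⟩

theorem eval_gram (v w : GaussianInt) (x y : ℤ) :
    (gram v w).eval x y = ((x : GaussianInt) * v + y * w).norm := by
  simp only [gram, eval, norm_eq, Zsqrtd.re_add, Zsqrtd.im_add, Zsqrtd.re_mul, Zsqrtd.im_mul,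
    Zsqrtd.re_star, Zsqrtd.im_star, Zsqrtd.re_intCast, Zsqrtd.im_intCast]
  ring

theorem gram_combo (v w : GaussianInt) (a b c d : ℤ) :
    gram (a * v + c * w) (b * v + d * w) = (gram v w).subst a b c d := by
  ext <;> simp only [gram, subst, eval, norm_eq, star_add, star_mul', star_intCast, Zsqrtd.re_add,
    Zsqrtd.im_add, Zsqrtd.re_mul, Zsqrtd.im_mul, Zsqrtd.re_star, Zsqrtd.im_star, Zsqrtd.re_intCast,
    Zsqrtd.im_intCast] <;> ring

theorem im_star_combo_mul (v w : GaussianInt) (a b c d : ℤ) :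
    (star (a * v + c * w) * (b * v + d * w)).im = (a * d - b * c) * (star v * w).im := by
  simp only [star_add, star_mul', star_intCast, Zsqrtd.re_add, Zsqrtd.im_add, Zsqrtd.re_mul,
    Zsqrtd.im_mul, Zsqrtd.re_star, Zsqrtd.im_star, Zsqrtd.re_intCast, Zsqrtd.im_intCast]
  ring

theorem det_gram (v w : GaussianInt) :
    (gram v w).left * (gram v w).right - (gram v w).mid ^ 2 = (star v * w).im ^ 2 := by
  simp only [gram, norm_eq, Zsqrtd.re_mul, Zsqrtd.im_mul, Zsqrtd.re_star, Zsqrtd.im_star]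
  ring

theorem gram_mul_left (k v w : GaussianInt) (hk : k.norm = 1) :
    gram (k * v) (k * w) = gram v w ∧ (star (k * v) * (k * w)).im = (star v * w).im := by
  have hk' : star k * k = 1 := by
    rw [mul_comm, ← intCast_norm_eq_mul_star, hk, Int.cast_one]
  have hmul : star (k * v) * (k * w) = star v * w := by
    rw [star_mul]
    linear_combination star v * w * hk'
  rw [gram, gram, hmul, Zsqrtd.norm_mul, Zsqrtd.norm_mul, hk, one_mul, one_mul]
  exact ⟨rfl, rfl⟩

theorem eq_of_norm_eq_one {k : GaussianInt} (h : k.norm = 1) :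
    (k = 1 ∨ k = -1) ∨ k = ⟨0, 1⟩ ∨ k = -⟨0, 1⟩ := by
  rw [norm_eq] at h
  simp only [Zsqrtd.ext_iff]
  have h1 : k.re ≤ 1 := by nlinarith
  have h2 : -1 ≤ k.re := by nlinarith
  have h3 : k.im ≤ 1 := by nlinarith
  have h4 : -1 ≤ k.im := by nlinarith
  generalize k.re = x at *
  generalize k.im = y at *
  interval_cases x <;> interval_cases y <;> simp_all

theorem Form.IsPrimitivePos.isCoprime {n : ℕ} {v w : GaussianInt}
    (h : (gram v w).IsPrimitivePos n) : IsCoprime v w := by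
  rw [← EuclideanDomain.gcd_isUnit_iff]
  obtain ⟨v', hv⟩ := EuclideanDomain.gcd_dvd_left v w
  obtain ⟨w', hw⟩ := EuclideanDomain.gcd_dvd_right v w
  set g := EuclideanDomain.gcd v w
  have hmid : star v * w = g.norm * (star v' * w') := by
    rw [hv, hw, star_mul, intCast_norm_eq_mul_star]
    ring
  refine Zsqrtd.norm_eq_one_iff.1 (Int.isUnit_iff_natAbs_eq.1
    (h.isUnit_of_dvd g.norm ⟨v'.norm, ?_⟩ ?_ ⟨w'.norm, ?_⟩))
  · rw [gram, ← Zsqrtd.norm_mul, ← hv]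
  · exact ((Zsqrtd.intCast_dvd g.norm (star v * w)).1 ⟨_, hmid⟩).1
  · rw [gram, ← Zsqrtd.norm_mul, ← hw]

theorem dvd_norm_gcd {l : ℤ} {ω : GaussianInt} (h : l ∣ ω.norm) :
    l ∣ (EuclideanDomain.gcd (l : GaussianInt) ω).norm := by
  obtain ⟨r, hr⟩ := h
  have hωω : ω * star ω = l * r := by
    rw [← intCast_norm_eq_mul_star, hr, Int.cast_mul]
  have hstar : star (l : GaussianInt) = l := by simp
  rw [← Zsqrtd.intCast_dvd_intCast (d := -1), intCast_norm_eq_mul_star,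
    EuclideanDomain.gcd_eq_gcd_ab, star_add, star_mul, star_mul, hstar]
  generalize EuclideanDomain.gcdA (l : GaussianInt) ω = a
  generalize EuclideanDomain.gcdB (l : GaussianInt) ω = b
  refine ⟨l * a * star a + a * star ω * star b + b * ω * star a + r * b * star b, ?_⟩
  linear_combination b * star b * hωω

section

variable {n : ℕ} [NeZero n] {f : Form}

theorem Form.IsPrimitivePos.exists_norm_eq_dvd (h : f.IsPrimitivePos n) :
    ∃ δ : GaussianInt, δ.norm = f.left ∧ δ ∣ ⟨f.mid, n⟩ := by
  set ω : GaussianInt := ⟨f.mid, n⟩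
  have hnorm : ω.norm = f.left * f.right := by
    rw [norm_eq]
    linear_combination -h.det
  have hstar : star (f.left : GaussianInt) = f.left := by simp
  have hleft0 := h.left_pos.ne'
  obtain ⟨α, hα⟩ := EuclideanDomain.gcd_dvd_left (f.left : GaussianInt) ω
  obtain ⟨γ, hγ⟩ := EuclideanDomain.gcd_dvd_right (f.left : GaussianInt) ω
  obtain ⟨m, hm⟩ := dvd_norm_gcd ⟨_, hnorm⟩
  set δ := EuclideanDomain.gcd (f.left : GaussianInt) ω
  -- `δ star δ` divides `left²`, `left * ω` and `ω star ω = left * right`, so `m` divides `f`.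
  have hm_left : f.left = m * α.norm := by
    refine mul_left_cancel₀ hleft0 ?_
    have hsq := congrArg Zsqrtd.norm hα
    rw [Zsqrtd.norm_mul, hm, Zsqrtd.norm_intCast] at hsq
    linear_combination hsq
  have hm_right : f.right = m * γ.norm := by
    refine mul_left_cancel₀ hleft0 ?_
    rw [← hnorm, hγ, Zsqrtd.norm_mul, hm, mul_assoc]
  have hm_mid : ω = m * (star α * γ) := by
    refine mul_left_cancel₀ (Int.cast_ne_zero.2 hleft0 : (f.left : GaussianInt) ≠ 0) ?_
    have hδ : (f.left : GaussianInt) * m = δ * star δ := by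
      rw [← intCast_norm_eq_mul_star, hm, Int.cast_mul]
    have hα' : (f.left : GaussianInt) = star δ * star α := by
      rw [← hstar, hα, star_mul, mul_comm]
    linear_combination ω * hα' + star δ * star α * hγ - star α * γ * hδ
  have hmunit := h.isUnit_of_dvd m ⟨_, hm_left⟩
    ((Zsqrtd.intCast_dvd m ω).1 ⟨_, hm_mid⟩).1 ⟨_, hm_right⟩
  exact ⟨δ, (Int.eq_of_associated_of_nonneg (hm ▸ (associated_mul_unit_right f.left m hmunit).symm)
    (GaussianInt.norm_nonneg δ) h.left_nonneg), γ, hγ⟩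

theorem Form.IsPrimitivePos.exists_gram_eq (h : f.IsPrimitivePos n) :
    ∃ v w, gram v w = f ∧ (star v * w).im = n := by
  obtain ⟨δ, hδ, γ, hγ⟩ := h.exists_norm_eq_dvd
  have hright : γ.norm = f.right := by
    refine mul_left_cancel₀ h.left_pos.ne' ?_
    have hnorm := congrArg Zsqrtd.norm hγ
    rw [Zsqrtd.norm_mul, hδ, norm_eq] at hnorm
    linear_combination -hnorm - h.det
  refine ⟨star δ, γ, Form.ext ?_ ?_ hright, ?_⟩
  · simpa only [gram, Zsqrtd.norm_conj] using hδ
  · simp only [gram, star_star, ← hγ]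
  · rw [star_star, ← hγ]

theorem Form.IsPrimitivePos.exists_norm_eq_one_of_gram_eq {v w v' w' : GaussianInt}
    (h : (gram v w).IsPrimitivePos n) (hgram : gram v' w' = gram v w)
    (him : (star v' * w').im = (star v * w).im) :
    ∃ k : GaussianInt, k.norm = 1 ∧ v' = k * v ∧ w' = k * w := by
  obtain ⟨hleft, hmid, -⟩ := Form.ext_iff.1 hgram
  have hnorm : v.norm ≠ 0 := h.left_pos.ne'
  have hv0 : v ≠ 0 := by
    rintro rfl
    exact hnorm Zsqrtd.norm_zero
  have hvv : v' * star v' = v * star v := by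
    rw [← intCast_norm_eq_mul_star, ← intCast_norm_eq_mul_star]
    exact congrArg _ hleft
  have hstar0 : star v ≠ 0 := star_ne_zero.2 hv0
  have hcross : v' * w = v * w' := by
    have hvw : star v' * w' = star v * w := Zsqrtd.ext hmid him
    refine mul_left_cancel₀ hstar0 ?_
    linear_combination -v' * hvw + w' * hvv
  obtain ⟨k, hk⟩ : v ∣ v' := h.isCoprime.dvd_of_dvd_mul_right ⟨w', hcross⟩
  refine ⟨k, mul_right_cancel₀ hnorm ?_, by rw [hk, mul_comm], mul_left_cancel₀ hv0 ?_⟩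
  · rw [one_mul, ← Zsqrtd.norm_mul, mul_comm, ← hk]
    exact hleft
  · rw [← hcross, hk, mul_assoc]

theorem Form.IsPrimitivePos.exists_isCoprime_eval (h : f.IsPrimitivePos n) :
    ∃ y : ℤ, IsCoprime (f.eval 1 y) n := by
  -- `y` is divisible by exactly those primes of `n` that do not divide `left`.
  let y : ℕ := ∏ p ∈ n.primeFactors with ¬ ((p : ℕ) : ℤ) ∣ f.left, p
  refine ⟨y, Int.isCoprime_iff_gcd_eq_one.2 (Nat.coprime_of_dvd fun p hp hpf hpn => ?_)⟩
  rw [Int.natAbs_natCast] at hpn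
  have hp' := Nat.prime_iff_prime_int.1 hp
  have hdvd : (p : ℤ) ∣ f.left + y * (2 * f.mid + f.right * y) := by
    rw [← Int.natCast_dvd, eval] at hpf
    convert hpf using 1
    ring
  by_cases hpl : (p : ℤ) ∣ f.left
  · have hpm : (p : ℤ) ∣ f.mid := by
      refine hp'.dvd_of_dvd_pow (n := 2) ?_
      rw [show f.mid ^ 2 = f.left * f.right - (n : ℤ) ^ 2 by linear_combination -h.det]
      exact dvd_sub (hpl.mul_right _) (dvd_pow (Int.natCast_dvd_natCast.2 hpn) two_ne_zero)
    have hpr : ¬ (p : ℤ) ∣ f.right := fun hpr => hp'.not_isUnit (h.isUnit_of_dvd p hpl hpm hpr)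
    have hpy : ¬ (p : ℤ) ∣ y := by
      rw [Int.natCast_dvd_natCast, hp.prime.dvd_finsetProd_iff]
      rintro ⟨q, hq, hpq⟩
      rw [Finset.mem_filter] at hq
      exact hq.2 ((Nat.prime_dvd_prime_iff_eq hp (Nat.prime_of_mem_primeFactors hq.1)).1 hpq ▸ hpl)
    have hpfactor := (hp'.dvd_or_dvd ((dvd_add_right hpl).1 hdvd)).resolve_left hpy
    exact (hp'.dvd_or_dvd ((dvd_add_right (hpm.mul_left 2)).1 hpfactor)).elim hpr hpy
  · have hpy : (p : ℤ) ∣ y := Int.natCast_dvd_natCast.2 (Finset.dvd_prod_of_mem _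
      (Finset.mem_filter.2 ⟨Nat.mem_primeFactors.2 ⟨hp, hpn, NeZero.ne n⟩, hpl⟩))
    exact hpl ((dvd_add_left (hpy.mul_right _)).1 hdvd)

end

section

variable {n : ℕ} {u u' : ZMod n × ZMod n} {v w v' w' x : GaussianInt}

/-- `(v, w)` is a positively oriented basis of `lattice u`, whose index in `ℤ[i]` is `n` when `u` is
invertible. -/
structure IsBasis (u : ZMod n × ZMod n) (v w : GaussianInt) : Prop where
  left_mem : v ∈ lattice u
  right_mem : w ∈ lattice u
  im_eq : (star v * w).im = n

theorem intCast_mul_mem_lattice (a : ℤ) (hv : v ∈ lattice u) : (a : GaussianInt) * v ∈ lattice u :=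
  zsmul_eq_mul v a ▸ (lattice u).zsmul_mem hv a

theorem residue_mem_lattice (v : GaussianInt) : v ∈ lattice (residue n v) :=
  mem_lattice.2 (mul_comm _ _)

theorem natCast_mem_lattice (u : ZMod n × ZMod n) : (n : GaussianInt) ∈ lattice u :=
  mem_lattice.2 (by simp)

theorem IsBasis.combo (h : IsBasis u v w) {a b c d : ℤ} (hdet : a * d - b * c = 1) :
    IsBasis u (a * v + c * w) (b * v + d * w) where
  left_mem := (lattice u).add_mem (intCast_mul_mem_lattice a h.left_mem)
    (intCast_mul_mem_lattice c h.right_mem)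
  right_mem := (lattice u).add_mem (intCast_mul_mem_lattice b h.left_mem)
    (intCast_mul_mem_lattice d h.right_mem)
  im_eq := by rw [im_star_combo_mul, hdet, one_mul, h.im_eq]

variable [NeZero n]

namespace IsBasis

theorem mem_lattice_iff (hu : u ∈ gaussUnits n) (h : IsBasis u v w) :
    x ∈ lattice u ↔ ∃ a c : ℤ, x = a * v + c * w := by
  constructor
  · intro hx
    obtain ⟨a, ha⟩ := natCast_dvd_im_mul_star hu hx h.right_mem
    obtain ⟨c, hc⟩ := natCast_dvd_im_mul_star hu h.left_mem hx
    have him := h.im_eq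
    have hn : (n : ℤ) ≠ 0 := by exact_mod_cast NeZero.ne n
    simp only [Zsqrtd.im_mul, Zsqrtd.re_star, Zsqrtd.im_star] at ha hc him
    refine ⟨a, c, Zsqrtd.ext (mul_left_cancel₀ hn ?_) (mul_left_cancel₀ hn ?_)⟩ <;>
      simp only [Zsqrtd.re_add, Zsqrtd.im_add, Zsqrtd.re_mul, Zsqrtd.im_mul, Zsqrtd.re_intCast,
        Zsqrtd.im_intCast]
    · linear_combination -x.re * him + v.re * ha + w.re * hc
    · linear_combination -x.im * him + v.im * ha + w.im * hc
  · rintro ⟨a, c, rfl⟩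
    exact (lattice u).add_mem (intCast_mul_mem_lattice a h.left_mem)
      (intCast_mul_mem_lattice c h.right_mem)

theorem lattice_eq (hu : u ∈ gaussUnits n) (hu' : u' ∈ gaussUnits n) (h : IsBasis u v w)
    (h' : IsBasis u' v w) : lattice u' = lattice u := by
  ext x
  rw [h.mem_lattice_iff hu, h'.mem_lattice_iff hu']

theorem isPrimitivePos (hu : u ∈ gaussUnits n) (h : IsBasis u v w) :
    (gram v w).IsPrimitivePos n where
  det := by rw [det_gram, h.im_eq]
  left_nonneg := GaussianInt.norm_nonneg v
  right_nonneg := GaussianInt.norm_nonneg w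
  isUnit_of_dvd k hl hm hr := by
    -- `k` divides the norms of all vectors of the lattice, in particular of `n` and a lift of `u`.
    have hdvd : ∀ x ∈ lattice u, k ∣ x.norm := fun x hx => by
      obtain ⟨a, c, rfl⟩ := (h.mem_lattice_iff hu).1 hx
      rw [← eval_gram, eval]
      exact dvd_add (dvd_add (hl.mul_right _) (((hm.mul_left 2).mul_right _).mul_right _))
        (hr.mul_right _)
    obtain ⟨g, rfl⟩ := residue_surjective n u
    have hcoprime := isCoprime_norm_iff.2 (residue_mem_gaussUnits_iff.1 hu)
    refine (hcoprime.mul_right hcoprime).isUnit_of_dvd' (hdvd g (residue_mem_lattice g)) ?_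
    simpa only [Zsqrtd.norm_natCast] using hdvd n (natCast_mem_lattice _)

theorem gram_eq_gram (hu : u ∈ gaussUnits n) (h : IsBasis u v w) (h' : IsBasis u v' w')
    (hs : (gram v w).IsStrictlyReduced) (hs' : (gram v' w').IsStrictlyReduced) :
    gram v' w' = gram v w := by
  obtain ⟨a, c, rfl⟩ := (h.mem_lattice_iff hu).1 h'.left_mem
  obtain ⟨b, d, rfl⟩ := (h.mem_lattice_iff hu).1 h'.right_mem
  have hdet : a * d - b * c = 1 := by
    have him := h'.im_eq
    rw [im_star_combo_mul, h.im_eq] at him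
    exact mul_right_cancel₀ (Int.natCast_ne_zero.2 (NeZero.ne n)) (him.trans (one_mul _).symm)
  rw [gram_combo] at hs' ⊢
  rw [subst_eq_of_isStrictlyReduced hs hs' (by rw [hdet, one_pow]), hdet, one_mul]

theorem mem_shortUnits_iff (hu : u ∈ gaussUnits n) (h : IsBasis u v w)
    (hr : (gram v w).IsReduced) : u ∈ shortUnits n ↔ v.norm ≤ n := by
  rw [mem_shortUnits, and_iff_right hu]
  constructor
  · rintro ⟨x, hx, hx0, hxn⟩
    obtain ⟨a, c, rfl⟩ := (h.mem_lattice_iff hu).1 hx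
    rw [← eval_gram] at hxn
    refine (hr.left_le_eval ?_).trans hxn
    by_contra! hac
    exact hx0 (by simp [hac.1, hac.2])
  · refine fun hn => ⟨v, h.left_mem, ?_, hn⟩
    rintro rfl
    exact (h.isPrimitivePos hu).left_pos.ne' Zsqrtd.norm_zero

end IsBasis

theorem exists_isBasis (hn : 2 ≤ n) (hu : u ∈ gaussUnits n) : ∃ v w, IsBasis u v w := by
  obtain ⟨g, rfl⟩ := residue_surjective n u
  have hg : 0 < Int.gcd g.re g.im := by
    by_contra! h
    obtain ⟨hre, him⟩ := Int.gcd_eq_zero_iff.1 (Nat.le_zero.1 h)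
    have hunit := isCoprime_norm_iff.2 (residue_mem_gaussUnits_iff.1 hu)
    rw [norm_eq, hre, him, zero_pow two_ne_zero, add_zero, isCoprime_zero_left,
      Int.isUnit_iff] at hunit
    omega
  obtain ⟨a, b, hab, ha, hb⟩ := Int.exists_gcd_one hg
  obtain ⟨d, c, hdc⟩ := Int.isCoprime_iff_gcd_eq_one.2 hab
  refine ⟨⟨a, b⟩, n * ⟨-c, d⟩, ⟨mem_lattice.2 ?_, mem_lattice.2 (by simp), ?_⟩⟩
  · generalize (Int.gcd g.re g.im : ℤ) = e at ha hb
    rw [residue, ha, hb]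
    push_cast
    ring
  · simp only [Zsqrtd.im_mul, Zsqrtd.re_mul, Zsqrtd.re_star, Zsqrtd.im_star, Zsqrtd.re_natCast,
      Zsqrtd.im_natCast]
    linear_combination n * hdc

theorem exists_isBasis_isReduced (hn : 2 ≤ n) (hu : u ∈ gaussUnits n) :
    ∃ v w, IsBasis u v w ∧ (gram v w).IsReduced := by
  obtain ⟨v, w, h⟩ := exists_isBasis hn hu
  suffices ∃ f : Form, (∃ v w, IsBasis u v w ∧ gram v w = f) ∧ f.IsReduced by
    obtain ⟨-, ⟨v', w', h', rfl⟩, hr⟩ := this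
    exact ⟨v', w', h', hr⟩
  refine exists_isReduced ?_ ?_ ?_ ⟨v, w, h, rfl⟩
  · rintro - ⟨v, w, -, rfl⟩
    exact ⟨GaussianInt.norm_nonneg v, GaussianInt.norm_nonneg w⟩
  · rintro - ⟨v, w, h, rfl⟩
    exact ⟨_, _, h.combo (by norm_num), gram_combo ..⟩
  · rintro - ⟨v, w, h, rfl⟩
    exact ⟨_, _, h.combo (by norm_num), gram_combo ..⟩

theorem Form.IsPrimitivePos.exists_gaussUnits_isBasis (h : (gram v w).IsPrimitivePos n)
    (him : (star v * w).im = n) : ∃ u ∈ gaussUnits n, IsBasis u v w := by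
  obtain ⟨y, hy⟩ := h.exists_isCoprime_eval
  rw [eval_gram, isCoprime_norm_iff, Int.cast_one, one_mul] at hy
  have hdet : ((star v * w).im : ZMod n) = 0 := by rw [him, Int.cast_natCast, ZMod.natCast_self]
  refine ⟨_, residue_mem_gaussUnits_iff.2 hy, ⟨mem_lattice.2 ?_, mem_lattice.2 ?_, him⟩⟩ <;>
    simp only [residue, Zsqrtd.im_mul, Zsqrtd.re_mul, Zsqrtd.re_star, Zsqrtd.im_star,
      Zsqrtd.re_add, Zsqrtd.im_add, Zsqrtd.re_intCast, Zsqrtd.im_intCast, Int.cast_add,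
      Int.cast_mul, Int.cast_neg, Int.cast_zero] at hdet ⊢
  · linear_combination -(y : ZMod n) * hdet
  · linear_combination hdet

end

section

variable {n : ℕ} {u u' : ZMod n × ZMod n} {v w : GaussianInt} {f g : Form}

/-- Multiplication by `i` on `ℤ[i] / n`. -/
def rot (u : ZMod n × ZMod n) : ZMod n × ZMod n := (-u.2, u.1)

theorem I_mul_mem_lattice_rot_iff : ⟨0, 1⟩ * v ∈ lattice (rot u) ↔ v ∈ lattice u := by
  simp only [mem_lattice, rot, Zsqrtd.im_mul, Zsqrtd.re_mul, zero_mul, one_mul, mul_one, zero_add,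
    mul_neg, Int.cast_neg, neg_mul, neg_inj]
  exact eq_comm

theorem IsBasis.I_mul (h : IsBasis u v w) : IsBasis (rot u) (⟨0, 1⟩ * v) (⟨0, 1⟩ * w) where
  left_mem := I_mul_mem_lattice_rot_iff.2 h.left_mem
  right_mem := I_mul_mem_lattice_rot_iff.2 h.right_mem
  im_eq := (gram_mul_left _ v w rfl).2.trans h.im_eq

theorem isBasis_neg_iff : IsBasis u (-v) (-w) ↔ IsBasis u v w := by
  constructor <;> rintro ⟨hv, hw, him⟩ <;>
    refine ⟨by simpa only [neg_mem_iff] using hv, by simpa only [neg_mem_iff] using hw, ?_⟩ <;>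
    simpa only [star_neg, neg_mul_neg] using him

theorem lattice_units_smul (s : (ZMod n)ˣ) (u : ZMod n × ZMod n) :
    lattice (s • u) = lattice u := by
  ext v
  simp only [mem_lattice, Prod.smul_fst, Prod.smul_snd, Units.smul_def, smul_eq_mul]
  rw [mul_left_comm, mul_left_comm (v.re : ZMod n), s.isUnit.mul_right_inj]

variable [NeZero n]

theorem rot_mem_gaussUnits (hu : u ∈ gaussUnits n) : rot u ∈ gaussUnits n := by
  rw [mem_gaussUnits] at hu ⊢
  rwa [rot, neg_sq, add_comm]

open Classical in
/-- The invertible residues with the same lattice as `u`. -/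
noncomputable def latticeClass (u : ZMod n × ZMod n) : Finset (ZMod n × ZMod n) :=
  (gaussUnits n).filter fun u' => lattice u' = lattice u

theorem mem_latticeClass : u' ∈ latticeClass u ↔ u' ∈ gaussUnits n ∧ lattice u' = lattice u := by
  simp only [latticeClass, Finset.mem_filter]

theorem units_smul_mem_gaussUnits (s : (ZMod n)ˣ) (hu : u ∈ gaussUnits n) :
    s • u ∈ gaussUnits n := by
  rw [mem_gaussUnits] at hu ⊢
  simp only [Prod.smul_fst, Prod.smul_snd, Units.smul_def, smul_eq_mul, mul_pow, ← mul_add]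
  exact (s.isUnit.pow 2).mul hu

theorem units_smul_injective (hu : u ∈ gaussUnits n) :
    Function.Injective fun s : (ZMod n)ˣ => s • u := by
  intro s t hst
  obtain ⟨h1, h2⟩ := Prod.ext_iff.1 hst
  simp only [Prod.smul_fst, Prod.smul_snd, Units.smul_def, smul_eq_mul] at h1 h2
  exact Units.ext ((mem_gaussUnits.1 hu).mul_right_cancel
    (by linear_combination u.1 * h1 + u.2 * h2))

theorem exists_units_smul_eq (hu : u ∈ gaussUnits n) (hu' : u' ∈ gaussUnits n)
    (h : lattice u' = lattice u) : ∃ s : (ZMod n)ˣ, s • u = u' := by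
  obtain ⟨g, rfl⟩ := residue_surjective n u'
  obtain ⟨t, ht⟩ := (mem_lattice_iff_exists hu).1 (h ▸ residue_mem_lattice g)
  have hunit : IsUnit (t ^ 2) := by
    refine isUnit_of_mul_isUnit_left (y := u.1 ^ 2 + u.2 ^ 2) ?_
    rw [ht, mem_gaussUnits] at hu'
    simpa only [Prod.smul_fst, Prod.smul_snd, smul_eq_mul, mul_pow, ← mul_add] using hu'
  obtain ⟨s, rfl⟩ := (isUnit_pow_iff two_ne_zero).1 hunit
  exact ⟨s, ht.symm⟩

theorem card_latticeClass (hu : u ∈ gaussUnits n) : (latticeClass u).card = n.totient := by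
  classical
  have himage : latticeClass u = Finset.univ.image fun s : (ZMod n)ˣ => s • u := by
    ext u'
    simp only [mem_latticeClass, Finset.mem_image, Finset.mem_univ, true_and]
    refine ⟨fun h => exists_units_smul_eq hu h.1 h.2, ?_⟩
    rintro ⟨s, rfl⟩
    exact ⟨units_smul_mem_gaussUnits s hu, lattice_units_smul s u⟩
  rw [himage, Finset.card_image_of_injective _ (units_smul_injective hu), Finset.card_univ,
    ZMod.card_units_eq_totient]

theorem lattice_rot_ne (hn : 2 ≤ n) (hu : u ∈ gaussUnits n) : lattice (rot u) ≠ lattice u := by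
  intro h
  obtain ⟨g, rfl⟩ := residue_surjective n u
  have hdvd : (n : GaussianInt) ∣ g := natCast_dvd_of_I_mul_mem hu (residue_mem_lattice g)
    (h ▸ I_mul_mem_lattice_rot_iff.2 (residue_mem_lattice g))
  have hunit := (residue_mem_gaussUnits_iff.1 hu).isUnit_of_dvd' hdvd dvd_rfl
  rw [Zsqrtd.isUnit_iff_norm_isUnit, Zsqrtd.norm_natCast] at hunit
  have := Int.isUnit_iff.1 (isUnit_of_mul_isUnit_left hunit)
  omega

open Classical in
/-- The invertible residues whose lattice has a positively oriented basis with Gram form `f`. -/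
noncomputable def basisUnits (n : ℕ) [NeZero n] (f : Form) : Finset (ZMod n × ZMod n) :=
  (gaussUnits n).filter fun u => ∃ v w, IsBasis u v w ∧ gram v w = f

theorem mem_basisUnits :
    u ∈ basisUnits n f ↔ u ∈ gaussUnits n ∧ ∃ v w, IsBasis u v w ∧ gram v w = f := by
  simp only [basisUnits, Finset.mem_filter]

/-- The pairs of vectors with a given primitive Gram form and orientation are the multiples of one
of them by `±1` and `±i`. -/
theorem exists_basisUnits_eq_union (hf : f.IsPrimitivePos n) :
    ∃ u ∈ gaussUnits n, basisUnits n f = latticeClass u ∪ latticeClass (rot u) := by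
  obtain ⟨v, w, rfl, him⟩ := hf.exists_gram_eq
  obtain ⟨u, hu, h⟩ := hf.exists_gaussUnits_isBasis him
  refine ⟨u, hu, ?_⟩
  ext u'
  rw [mem_basisUnits, Finset.mem_union, mem_latticeClass, mem_latticeClass, ← and_or_left]
  refine and_congr_right fun hu' => ⟨?_, ?_⟩
  · rintro ⟨v', w', h', hgram⟩
    obtain ⟨k, hk, rfl, rfl⟩ := hf.exists_norm_eq_one_of_gram_eq hgram (h'.im_eq.trans him.symm)
    rcases eq_of_norm_eq_one hk with (rfl | rfl) | rfl | rfl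
    · rw [one_mul, one_mul] at h'
      exact Or.inl (h.lattice_eq hu hu' h')
    · rw [neg_one_mul, neg_one_mul, isBasis_neg_iff] at h'
      exact Or.inl (h.lattice_eq hu hu' h')
    · exact Or.inr (h.I_mul.lattice_eq (rot_mem_gaussUnits hu) hu' h')
    · rw [neg_mul, neg_mul, isBasis_neg_iff] at h'
      exact Or.inr (h.I_mul.lattice_eq (rot_mem_gaussUnits hu) hu' h')
  · rintro (h' | h')
    · exact ⟨v, w, ⟨h' ▸ h.left_mem, h' ▸ h.right_mem, him⟩, rfl⟩
    · exact ⟨_, _, ⟨h' ▸ h.I_mul.left_mem, h' ▸ h.I_mul.right_mem, h.I_mul.im_eq⟩,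
        (gram_mul_left _ v w rfl).1⟩

theorem card_basisUnits (hn : 2 ≤ n) (hf : f.IsPrimitivePos n) :
    (basisUnits n f).card = 2 * n.totient := by
  obtain ⟨u, hu, heq⟩ := exists_basisUnits_eq_union hf
  have hdisj : Disjoint (latticeClass u) (latticeClass (rot u)) :=
    Finset.disjoint_left.2 fun u' h h' => lattice_rot_ne hn hu
      ((mem_latticeClass.1 h').2.symm.trans (mem_latticeClass.1 h).2)
  rw [heq, Finset.card_union_of_disjoint hdisj, card_latticeClass hu,
    card_latticeClass (rot_mem_gaussUnits hu), two_mul]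

theorem eq_of_mem_basisUnits (hf : f.IsStrictlyReduced) (hg : g.IsStrictlyReduced)
    (huf : u ∈ basisUnits n f) (hug : u ∈ basisUnits n g) : f = g := by
  obtain ⟨hu, v, w, h, rfl⟩ := mem_basisUnits.1 huf
  obtain ⟨-, v', w', h', rfl⟩ := mem_basisUnits.1 hug
  exact (h.gram_eq_gram hu h' hf hg).symm

/-- The invertible residues attached to the `GL₂(ℤ)`-class of `f`, namely those whose lattice has
Gram form `f` in a basis of either orientation. -/
noncomputable def formUnits (n : ℕ) [NeZero n] (f : Form) : Finset (ZMod n × ZMod n) :=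
  basisUnits n f ∪ basisUnits n f.neg

theorem card_formUnits_le (hn : 2 ≤ n) (hf : f.IsPrimitivePos n) :
    (formUnits n f).card ≤ 4 * n.totient := by
  refine (Finset.card_union_le _ _).trans_eq ?_
  rw [card_basisUnits hn hf, card_basisUnits hn hf.neg]
  ring

theorem card_formUnits (hn : 2 ≤ n) (hf : f ∈ interiorForms n) :
    (formUnits n f).card = 4 * n.totient := by
  obtain ⟨hf, hr, hmid⟩ := mem_interiorForms.1 hf
  have hdisj : Disjoint (basisUnits n f) (basisUnits n f.neg) :=
    Finset.disjoint_left.2 fun u hu hu' => by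
      have hneg : f.mid = -f.mid := congrArg Form.mid (eq_of_mem_basisUnits hr hr.neg hu hu')
      omega
  rw [formUnits, Finset.card_union_of_disjoint hdisj, card_basisUnits hn hf,
    card_basisUnits hn hf.neg]
  ring

theorem disjoint_formUnits (hf : f ∈ interiorForms n) (hg : g ∈ interiorForms n) (hfg : f ≠ g) :
    Disjoint (formUnits n f) (formUnits n g) := by
  obtain ⟨-, hf, hfmid⟩ := mem_interiorForms.1 hf
  obtain ⟨-, hg, hgmid⟩ := mem_interiorForms.1 hg
  refine Finset.disjoint_left.2 fun u huf hug => hfg ?_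
  rw [formUnits, Finset.mem_union] at huf hug
  have hmid_ne : f.mid ≠ -g.mid := by omega
  have hmid_ne' : -f.mid ≠ g.mid := by omega
  rcases huf with huf | huf <;> rcases hug with hug | hug
  · exact eq_of_mem_basisUnits hf hg huf hug
  · exact absurd (congrArg Form.mid (eq_of_mem_basisUnits hf hg.neg huf hug)) hmid_ne
  · exact absurd (congrArg Form.mid (eq_of_mem_basisUnits hf.neg hg huf hug)) hmid_ne'
  · rw [← f.neg_neg, eq_of_mem_basisUnits hf.neg hg.neg huf hug, g.neg_neg]

theorem exists_mem_formUnits (hn : 2 ≤ n) (hu : u ∈ gaussUnits n) :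
    ∃ f ∈ reducedForms n, u ∈ formUnits n f := by
  obtain ⟨v, w, h, hr⟩ := exists_isBasis_isReduced hn hu
  have hprim := h.isPrimitivePos hu
  rcases le_total 0 (gram v w).mid with hmid | hmid
  · exact ⟨gram v w, mem_reducedForms.2 ⟨hprim, hr, hmid⟩,
      Finset.mem_union_left _ (mem_basisUnits.2 ⟨hu, v, w, h, rfl⟩)⟩
  · exact ⟨(gram v w).neg, mem_reducedForms.2 ⟨hprim.neg, hr.neg, neg_nonneg.2 hmid⟩,
      Finset.mem_union_right _ (mem_basisUnits.2 ⟨hu, v, w, h, (Form.neg_neg _).symm⟩)⟩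

theorem mem_shortUnits_iff_of_mem_formUnits (hf : f.IsReduced) (hu : u ∈ formUnits n f) :
    u ∈ shortUnits n ↔ f.left ≤ n := by
  rcases Finset.mem_union.1 hu with hu | hu <;>
    obtain ⟨hu', v, w, h, hgram⟩ := mem_basisUnits.1 hu
  · subst hgram
    exact h.mem_shortUnits_iff hu' hf
  · have hleft : v.norm = f.left := congrArg Form.left hgram
    rw [← hleft]
    exact h.mem_shortUnits_iff hu' (hgram ▸ hf.neg)

theorem mem_gaussUnits_of_mem_formUnits (hu : u ∈ formUnits n f) : u ∈ gaussUnits n :=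
  (Finset.mem_union.1 hu).elim (fun h => (mem_basisUnits.1 h).1) fun h => (mem_basisUnits.1 h).1

section

variable (P : Form → Prop) [DecidablePred P] (U : Finset (ZMod n × ZMod n))

theorem mul_card_interiorForms_filter_le (hn : 2 ≤ n)
    (hU : ∀ f ∈ interiorForms n, P f → formUnits n f ⊆ U) :
    4 * n.totient * ((interiorForms n).filter P).card ≤ U.card := by
  classical
  calc 4 * n.totient * ((interiorForms n).filter P).card
      = ∑ f ∈ (interiorForms n).filter P, (formUnits n f).card := by
        rw [Finset.sum_congr rfl fun f hf => card_formUnits hn (Finset.mem_filter.1 hf).1,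
          Finset.sum_const, smul_eq_mul, mul_comm]
    _ = (((interiorForms n).filter P).biUnion (formUnits n)).card :=
        (Finset.card_biUnion fun f hf g hg hfg =>
          disjoint_formUnits (Finset.mem_filter.1 hf).1 (Finset.mem_filter.1 hg).1 hfg).symm
    _ ≤ U.card := Finset.card_le_card <| Finset.biUnion_subset.2 fun f hf =>
        hU f (Finset.mem_filter.1 hf).1 (Finset.mem_filter.1 hf).2

theorem card_le_mul_card_reducedForms_filter (hn : 2 ≤ n)
    (hU : ∀ u ∈ U, ∃ f ∈ reducedForms n, P f ∧ u ∈ formUnits n f) :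
    U.card ≤ 4 * n.totient * ((reducedForms n).filter P).card := by
  classical
  have hsub : U ⊆ ((reducedForms n).filter P).biUnion (formUnits n) := fun u hu => by
    obtain ⟨f, hf, hP, huf⟩ := hU u hu
    exact Finset.mem_biUnion.2 ⟨f, Finset.mem_filter.2 ⟨hf, hP⟩, huf⟩
  rw [mul_comm]
  exact (Finset.card_le_card hsub).trans (Finset.card_biUnion_le_card_mul _ _ _ fun f hf =>
    card_formUnits_le hn (mem_reducedForms.1 (Finset.mem_filter.1 hf).1).1)

end

end

/-! ### Orbits of quadruples -/

section

variable {n : ℕ} {f g : Form} {q q' : Fin 4 → ℤ} {M : Matrix (Fin 4) (Fin 4) ℤ}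

/-- The quadruple `(n, a, b, c)` attached to the form
`(n + a) x² + (n + a + b - c) x y + (n + b) y²`. Its last three entries are
`f (1, 0) - n`, `f (0, 1) - n` and `f (1, -1) - n`. -/
def quadOf (n : ℕ) (f : Form) : Fin 4 → ℤ :=
  ![n, f.left - n, f.right - n, f.left + f.right - n - 2 * f.mid]

theorem quadOf_injective (n : ℕ) : Function.Injective (quadOf n) := by
  intro f g h
  have h1 : f.left - n = g.left - n := congrFun h 1
  have h2 : f.right - n = g.right - n := congrFun h 2
  have h3 : f.left + f.right - n - 2 * f.mid = g.left + g.right - n - 2 * g.mid := congrFun h 3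
  ext <;> omega

theorem dvd_quadOf_iff (hdet : f.left * f.right - f.mid ^ 2 = (n : ℤ) ^ 2) (k : ℤ) :
    (∀ i, k ∣ quadOf n f i) ↔ k ∣ f.left ∧ k ∣ f.mid ∧ k ∣ f.right := by
  constructor
  · intro h
    have hn : k ∣ n := h 0
    have hl : k ∣ f.left := (dvd_sub_left hn).1 (h 1)
    have hr : k ∣ f.right := (dvd_sub_left hn).1 (h 2)
    refine ⟨hl, (Int.pow_dvd_pow_iff two_ne_zero).1 ?_, hr⟩
    rw [show f.mid ^ 2 = f.left * f.right - (n : ℤ) ^ 2 by linear_combination -hdet, sq k]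
    exact dvd_sub (mul_dvd_mul hl hr) (sq (n : ℤ) ▸ mul_dvd_mul hn hn)
  · rintro ⟨hl, hm, hr⟩
    have hn : k ∣ n := by
      refine (Int.pow_dvd_pow_iff two_ne_zero).1 ?_
      rw [← hdet, sq, sq]
      exact dvd_sub (mul_dvd_mul hl hr) (mul_dvd_mul hm hm)
    intro i
    fin_cases i
    exacts [hn, dvd_sub hl hn, dvd_sub hr hn, dvd_sub (dvd_sub (dvd_add hl hr) hn) (hm.mul_left 2)]

theorem gcd_eq_one_iff (q : Fin 4 → ℤ) :
    Int.gcd (Int.gcd (Int.gcd (q 0) (q 1) : ℤ) (q 2) : ℤ) (q 3) = 1 ↔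
      ∀ k : ℤ, (∀ i, k ∣ q i) → IsUnit k := by
  have hdvd : ∀ k : ℤ, k ∣ Int.gcd (Int.gcd (Int.gcd (q 0) (q 1) : ℤ) (q 2) : ℤ) (q 3) ↔
      ∀ i, k ∣ q i := fun k => by
    simp only [Int.dvd_coe_gcd_iff, Fin.forall_fin_succ, IsEmpty.forall_iff, and_true, and_assoc]
    rfl
  rw [← Nat.isUnit_iff, ← Int.ofNat_isUnit]
  exact ⟨fun h k hk => isUnit_of_dvd_unit ((hdvd k).2 hk) h, fun h => h _ ((hdvd _).1 dvd_rfl)⟩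

theorem quadOf_mem_DSet_iff : quadOf n f ∈ DSet n ↔ f.IsPrimitivePos n := by
  have hdescartes : (quadOf n f 0 + quadOf n f 1 + quadOf n f 2 + quadOf n f 3) ^ 2 =
      2 * (quadOf n f 0 ^ 2 + quadOf n f 1 ^ 2 + quadOf n f 2 ^ 2 + quadOf n f 3 ^ 2) ↔
      f.left * f.right - f.mid ^ 2 = (n : ℤ) ^ 2 := by
    change (n + (f.left - n) + (f.right - n) + (f.left + f.right - n - 2 * f.mid)) ^ 2 =
      2 * ((n : ℤ) ^ 2 + (f.left - n) ^ 2 + (f.right - n) ^ 2 +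
        (f.left + f.right - n - 2 * f.mid) ^ 2) ↔ _
    constructor <;> intro h <;> nlinarith
  have hleft : quadOf n f 0 + quadOf n f 1 = f.left := add_sub_cancel _ _
  have hright : quadOf n f 0 + quadOf n f 2 = f.right := add_sub_cancel _ _
  rw [DSet, Set.mem_ofPred_eq, gcd_eq_one_iff, hdescartes, hleft, hright]
  constructor
  · rintro ⟨-, hprim, hdet, hl, hr⟩
    exact ⟨hdet, hl, hr, fun k h1 h2 h3 => hprim k ((dvd_quadOf_iff hdet k).2 ⟨h1, h2, h3⟩)⟩
  · rintro ⟨hdet, hl, hr, hprim⟩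
    refine ⟨rfl, fun k hk => ?_, hdet, hl, hr⟩
    obtain ⟨h1, h2, h3⟩ := (dvd_quadOf_iff hdet k).1 hk
    exact hprim k h1 h2 h3

theorem exists_quadOf_eq (hq : q ∈ DSet n) : ∃ f, quadOf n f = q := by
  obtain ⟨h0, -, hdescartes, -⟩ := hq
  have heven : Even (q 0 + q 1 + q 2 + q 3) := by
    rw [← Int.even_pow' two_ne_zero, hdescartes]
    exact even_two_mul _
  obtain ⟨m, hm⟩ := heven
  refine ⟨⟨n + q 1, n + q 1 + q 2 - m, n + q 2⟩, ?_⟩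
  ext i
  fin_cases i
  · exact h0.symm
  · exact add_sub_cancel_left _ _
  · exact add_sub_cancel_left _ _
  · change (n + q 1) + (n + q 2) - n - 2 * (n + q 1 + q 2 - m) = q 3
    linarith

theorem S₄_mulVec (a b c d : ℤ) :
    S₄.mulVec ![a, b, c, d] = ![a, b, c, 2 * a + 2 * b + 2 * c - d] := by
  ext i
  fin_cases i <;> simp [S₄, Matrix.mulVec, dotProduct, Fin.sum_univ_four, sub_eq_add_neg]

theorem P₂₃_mulVec (a b c d : ℤ) : P₂₃.mulVec ![a, b, c, d] = ![a, c, b, d] := by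
  ext i
  fin_cases i <;> simp [P₂₃, Matrix.mulVec, dotProduct, Fin.sum_univ_four]

theorem P₂₄_mulVec (a b c d : ℤ) : P₂₄.mulVec ![a, b, c, d] = ![a, d, c, b] := by
  ext i
  fin_cases i <;> simp [P₂₄, Matrix.mulVec, dotProduct, Fin.sum_univ_four]

theorem S₄_mulVec_quadOf (f : Form) :
    S₄.mulVec (quadOf n f) = quadOf n (f.subst 1 0 0 (-1)) := by
  simp only [quadOf, S₄_mulVec, subst, eval]
  ring_nf

theorem P₂₃_mulVec_quadOf (f : Form) :
    P₂₃.mulVec (quadOf n f) = quadOf n (f.subst 0 1 1 0) := by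
  simp only [quadOf, P₂₃_mulVec, subst, eval]
  ring_nf

theorem P₂₄_mulVec_quadOf (f : Form) :
    P₂₄.mulVec (quadOf n f) = quadOf n (f.subst 1 0 (-1) (-1)) := by
  simp only [quadOf, P₂₄_mulVec, subst, eval]
  ring_nf

theorem S₄_mem : S₄ ∈ Ap₁ := Submonoid.subset_closure (by simp)

theorem P₂₃_mem : P₂₃ ∈ Ap₁ := Submonoid.subset_closure (by simp)

theorem P₂₄_mem : P₂₄ ∈ Ap₁ := Submonoid.subset_closure (by simp)

theorem exists_inv_mem (hM : M ∈ Ap₁) : ∃ N ∈ Ap₁, N * M = 1 := by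
  induction hM using Submonoid.closure_induction with
  | mem M hM =>
    refine ⟨M, Submonoid.subset_closure hM, ?_⟩
    rcases hM with rfl | rfl | rfl <;> decide
  | one => exact ⟨1, one_mem _, one_mul 1⟩
  | mul M M' _ _ h h' =>
    obtain ⟨N, hN, h⟩ := h
    obtain ⟨N', hN', h'⟩ := h'
    exact ⟨N' * N, mul_mem hN' hN, by rw [mul_assoc, ← mul_assoc N, h, one_mul, h']⟩

theorem exists_mulVec_quadOf_eq (hM : M ∈ Ap₁) (f : Form) :
    ∃ a b c d : ℤ, (a * d - b * c) ^ 2 = 1 ∧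
      M.mulVec (quadOf n f) = quadOf n (f.subst a b c d) := by
  induction hM using Submonoid.closure_induction generalizing f with
  | mem M hM =>
    rcases hM with rfl | rfl | rfl
    · exact ⟨0, 1, 1, 0, by norm_num, P₂₃_mulVec_quadOf f⟩
    · exact ⟨1, 0, -1, -1, by norm_num, P₂₄_mulVec_quadOf f⟩
    · exact ⟨1, 0, 0, -1, by norm_num, S₄_mulVec_quadOf f⟩
  | one => exact ⟨1, 0, 0, 1, by norm_num, by rw [Matrix.one_mulVec, subst_one]⟩
  | mul M N _ _ hM hN =>
    obtain ⟨a, b, c, d, hdet, h⟩ := hN f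
    obtain ⟨a', b', c', d', hdet', h'⟩ := hM (f.subst a b c d)
    refine ⟨_, _, _, _, ?_, by rw [← Matrix.mulVec_mulVec, h, h', subst_subst]⟩
    linear_combination (a' * d' - b' * c') ^ 2 * hdet + hdet'

/-- The orbit of a quadruple under `Ap₁`. -/
def orbit (q : Fin 4 → ℤ) : Set (Fin 4 → ℤ) := {q' | ∃ M ∈ Ap₁, q' = M.mulVec q}

theorem mem_orbit_self (q : Fin 4 → ℤ) : q ∈ orbit q := ⟨1, one_mem _, (Matrix.one_mulVec q).symm⟩

theorem mulVec_mem_orbit (hM : M ∈ Ap₁) (h : q' ∈ orbit q) : M.mulVec q' ∈ orbit q := by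
  obtain ⟨N, hN, rfl⟩ := h
  exact ⟨M * N, mul_mem hM hN, by rw [Matrix.mulVec_mulVec]⟩

theorem orbit_eq_of_mem (h : q' ∈ orbit q) : orbit q' = orbit q := by
  refine Set.Subset.antisymm ?_ ?_
  · rintro _ ⟨M, hM, rfl⟩
    exact mulVec_mem_orbit hM h
  · rintro _ ⟨M, hM, rfl⟩
    obtain ⟨M', hM', rfl⟩ := h
    obtain ⟨N, hN, hNM⟩ := exists_inv_mem hM'
    exact ⟨M * N, mul_mem hM hN, by rw [Matrix.mulVec_mulVec, mul_assoc, hNM, mul_one]⟩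

theorem quadOf_neg_mem_orbit (h : quadOf n f ∈ orbit q) : quadOf n f.neg ∈ orbit q := by
  convert mulVec_mem_orbit S₄_mem h using 1
  rw [S₄_mulVec_quadOf]
  congr 1
  ext <;> simp only [Form.neg, subst, eval] <;> ring

theorem quadOf_subst_rot_mem_orbit (h : quadOf n f ∈ orbit q) :
    quadOf n (f.subst 0 1 (-1) 0) ∈ orbit q := by
  convert mulVec_mem_orbit P₂₃_mem (mulVec_mem_orbit S₄_mem h) using 1
  rw [S₄_mulVec_quadOf, P₂₃_mulVec_quadOf, subst_subst]
  norm_num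

theorem quadOf_subst_add_mem_orbit (h : quadOf n f ∈ orbit q) :
    quadOf n (f.subst 1 1 0 1) ∈ orbit q := by
  convert mulVec_mem_orbit P₂₃_mem (mulVec_mem_orbit P₂₄_mem
    (mulVec_mem_orbit P₂₃_mem (mulVec_mem_orbit S₄_mem h))) using 1
  rw [S₄_mulVec_quadOf, P₂₃_mulVec_quadOf, P₂₄_mulVec_quadOf, P₂₃_mulVec_quadOf]
  simp only [subst_subst]
  congr 1
  ext <;> simp only [subst, eval] <;> ring

theorem exists_reducedForms_mem_orbit [NeZero n] (h : f.IsPrimitivePos n) :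
    ∃ g ∈ reducedForms n, quadOf n g ∈ orbit (quadOf n f) := by
  obtain ⟨g, ⟨hg, hmem⟩, hr⟩ := exists_isReduced
    (R := fun g => g.IsPrimitivePos n ∧ quadOf n g ∈ orbit (quadOf n f))
    (fun g hg => ⟨hg.1.left_nonneg, hg.1.right_nonneg⟩)
    (fun g hg => ⟨hg.1.subst (by norm_num), quadOf_subst_rot_mem_orbit hg.2⟩)
    (fun g hg => ⟨hg.1.subst (by norm_num), quadOf_subst_add_mem_orbit hg.2⟩)
    ⟨h, mem_orbit_self _⟩
  rcases le_total 0 g.mid with hmid | hmid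
  · exact ⟨g, mem_reducedForms.2 ⟨hg, hr, hmid⟩, hmem⟩
  · exact ⟨g.neg, mem_reducedForms.2 ⟨hg.neg, hr.neg, neg_nonneg.2 hmid⟩,
      quadOf_neg_mem_orbit hmem⟩

/-- The `Ap₁`-orbit of the quadruple attached to a form. -/
def formOrbit (n : ℕ) (f : Form) : Set (Fin 4 → ℤ) := orbit (quadOf n f)

theorem eq_of_formOrbit_eq [NeZero n] (hf : f ∈ interiorForms n) (hg : g ∈ interiorForms n)
    (h : formOrbit n f = formOrbit n g) : f = g := by
  obtain ⟨-, hf, hfmid⟩ := mem_interiorForms.1 hf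
  obtain ⟨-, hg, hgmid⟩ := mem_interiorForms.1 hg
  obtain ⟨M, hM, hMeq⟩ : quadOf n g ∈ formOrbit n f := h ▸ mem_orbit_self _
  obtain ⟨a, b, c, d, hdet, hsubst⟩ := exists_mulVec_quadOf_eq (n := n) hM f
  obtain rfl := quadOf_injective n (hMeq.trans hsubst)
  have heq := subst_eq_of_isStrictlyReduced hf hg hdet
  rw [heq] at hgmid ⊢
  rcases sq_eq_one_iff.1 hdet with hone | hneg
  · rw [hone, one_mul]
  · simp only [hneg] at hgmid
    omega

theorem exists_nonpos_iff [NeZero n] (hr : f.IsReduced) :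
    (∃ q ∈ formOrbit n f, ∃ i, q i ≤ 0) ↔ f.left ≤ n := by
  constructor
  · rintro ⟨q, ⟨M, hM, rfl⟩, i, hi⟩
    obtain ⟨a, b, c, d, hdet, hsubst⟩ := exists_mulVec_quadOf_eq (n := n) hM f
    rw [hsubst] at hi
    set g := f.subst a b c d
    have hle : ∀ x y : ℤ, x ≠ 0 ∨ y ≠ 0 → f.left ≤ g.eval x y := fun x y =>
      hr.left_le_eval_subst hdet
    fin_cases i
    · exact absurd hi (not_le.2 (Nat.cast_pos.2 (NeZero.pos n)))
    · have := hle 1 0 (by norm_num)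
      rw [eval_one_zero] at this
      exact this.trans (sub_nonpos.1 hi)
    · have := hle 0 1 (by norm_num)
      rw [eval_zero_one] at this
      exact this.trans (sub_nonpos.1 hi)
    · have := hle 1 (-1) (by norm_num)
      have hi : g.left + g.right - n - 2 * g.mid ≤ 0 := hi
      rw [eval] at this
      linarith
  · exact fun h => ⟨_, mem_orbit_self _, 1, sub_nonpos.2 h⟩

variable [NeZero n]

theorem ID_eq : ID n = formOrbit n '' reducedForms n := by
  ext O
  constructor
  · rintro ⟨q, hq, rfl⟩
    obtain ⟨f, rfl⟩ := exists_quadOf_eq hq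
    obtain ⟨g, hg, hmem⟩ := exists_reducedForms_mem_orbit (quadOf_mem_DSet_iff.1 hq)
    exact ⟨g, hg, orbit_eq_of_mem hmem⟩
  · rintro ⟨f, hf, rfl⟩
    exact ⟨quadOf n f, quadOf_mem_DSet_iff.2 (mem_reducedForms.1 hf).1, rfl⟩

theorem ID₀_eq : ID₀ n = formOrbit n '' ↑((reducedForms n).filter fun f => f.left ≤ (n : ℤ)) := by
  ext O
  constructor
  · rintro ⟨hO, h⟩
    rw [ID_eq] at hO
    obtain ⟨f, hf, rfl⟩ := hO
    exact ⟨f, Finset.mem_filter.2 ⟨hf, (exists_nonpos_iff (mem_reducedForms.1 hf).2.1).1 h⟩, rfl⟩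
  · rintro ⟨f, hf, rfl⟩
    obtain ⟨hf, hleft⟩ := Finset.mem_filter.1 hf
    exact ⟨ID_eq (n := n) ▸ ⟨f, hf, rfl⟩, (exists_nonpos_iff (mem_reducedForms.1 hf).2.1).2 hleft⟩

section

variable (P : Form → Prop) [DecidablePred P]

theorem card_interiorForms_filter_le_ncard :
    ((interiorForms n).filter P).card ≤
      (formOrbit n '' ((reducedForms n).filter P : Set Form)).ncard := by
  have hinj : Set.InjOn (formOrbit n) ((interiorForms n).filter P : Set Form) :=
    fun f hf g hg => eq_of_formOrbit_eq (Finset.mem_filter.1 hf).1 (Finset.mem_filter.1 hg).1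
  rw [← Set.ncard_coe_finset, ← hinj.ncard_image]
  exact Set.ncard_le_ncard (Set.image_mono (Finset.coe_subset.2
    (Finset.filter_subset_filter P interiorForms_subset))) ((Finset.finite_toSet _).image _)

theorem ncard_le_card_reducedForms_filter :
    (formOrbit n '' ((reducedForms n).filter P : Set Form)).ncard ≤
      ((reducedForms n).filter P).card := by
  rw [← Set.ncard_coe_finset]
  exact Set.ncard_image_le (Finset.finite_toSet _)

end

end

/-! ### Asymptotics -/

section

variable {n : ℕ} [NeZero n]

theorem abs_mul_ncard_sub_le (hn : 2 ≤ n) (P : Form → Prop) [DecidablePred P]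
    (U : Finset (ZMod n × ZMod n)) (hPU : ∀ f ∈ interiorForms n, P f → formUnits n f ⊆ U)
    (hUP : ∀ u ∈ U, ∃ f ∈ reducedForms n, P f ∧ u ∈ formUnits n f) :
    |4 * (n.totient : ℝ) * (formOrbit n '' ((reducedForms n).filter P : Set Form)).ncard -
      U.card| ≤ 12 * n * (4 * n ^ 2).divisors.card := by
  have hI := card_interiorForms_filter_le_ncard (n := n) P
  have hR := ncard_le_card_reducedForms_filter (n := n) P
  set I := (formOrbit n '' ((reducedForms n).filter P : Set Form)).ncard
  set d := (4 * n ^ 2).divisors.card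
  have hboundary : 4 * n.totient * ((reducedForms n).filter P).card ≤
      4 * n.totient * ((interiorForms n).filter P).card + 12 * n * d :=
    calc 4 * n.totient * ((reducedForms n).filter P).card
        ≤ 4 * n.totient * (((interiorForms n).filter P).card + 3 * d) :=
          Nat.mul_le_mul_left _ (card_reducedForms_filter_le P)
      _ = 4 * n.totient * ((interiorForms n).filter P).card + n.totient * (12 * d) := by ring
      _ ≤ 4 * n.totient * ((interiorForms n).filter P).card + n * (12 * d) := by
          gcongr
          exact n.totient_le
      _ = 4 * n.totient * ((interiorForms n).filter P).card + 12 * n * d := by ring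
  have hupper : 4 * n.totient * I ≤ U.card + 12 * n * d :=
    (Nat.mul_le_mul_left _ hR).trans (hboundary.trans
      (Nat.add_le_add_right (mul_card_interiorForms_filter_le P U hn hPU) _))
  have hlower : U.card ≤ 4 * n.totient * I + 12 * n * d :=
    (card_le_mul_card_reducedForms_filter P U hn hUP).trans
      (hboundary.trans (Nat.add_le_add_right (Nat.mul_le_mul_left _ hI) _))
  rw [abs_sub_le_iff, sub_le_iff_le_add', sub_le_iff_le_add']
  exact ⟨by exact_mod_cast hupper, by exact_mod_cast hlower⟩

theorem abs_mul_ncard_ID_sub_le (hn : 2 ≤ n) :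
    |4 * (n.totient : ℝ) * (ID n).ncard - (gaussUnits n).card| ≤
      12 * n * (4 * n ^ 2).divisors.card := by
  have h := abs_mul_ncard_sub_le hn (fun _ => True) (gaussUnits n)
    (fun f _ _ u hu => mem_gaussUnits_of_mem_formUnits hu)
    fun u hu => by simpa only [true_and] using exists_mem_formUnits hn hu
  rwa [Finset.filter_true, ← ID_eq] at h

theorem abs_mul_ncard_ID₀_sub_le (hn : 2 ≤ n) :
    |4 * (n.totient : ℝ) * (ID₀ n).ncard - (shortUnits n).card| ≤
      12 * n * (4 * n ^ 2).divisors.card := by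
  rw [ID₀_eq]
  refine abs_mul_ncard_sub_le hn _ _ (fun f hf hleft u hu => ?_) fun u hu => ?_
  · have hr := (mem_reducedForms.1 (interiorForms_subset hf)).2.1
    exact (mem_shortUnits_iff_of_mem_formUnits hr hu).2 hleft
  · obtain ⟨f, hf, huf⟩ := exists_mem_formUnits hn (mem_shortUnits.1 hu).1
    have hr := (mem_reducedForms.1 hf).2.1
    exact ⟨f, hf, (mem_shortUnits_iff_of_mem_formUnits hr huf).1 hu, huf⟩

end

/-- The common order of magnitude of all the relative error terms. -/
noncomputable def errorTerm (n : ℕ) : ℝ := (n.divisors.card : ℝ) ^ 5 * (1 + Real.log n) / √n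

open Filter Asymptotics in
theorem tendsto_errorTerm : Tendsto errorTerm atTop (nhds 0) := by
  obtain ⟨K, hK⟩ := exists_card_divisors_le (ε := 1 / 20) (by norm_num)
  have hdiv :
      (fun n : ℕ => (n.divisors.card : ℝ) ^ 5) =O[atTop] fun n => (n : ℝ) ^ (1 / 4 : ℝ) := by
    have h : (fun n : ℕ => (n.divisors.card : ℝ)) =O[atTop] fun n => (n : ℝ) ^ (1 / 20 : ℝ) :=
      IsBigO.of_bound K <| (eventually_ne_atTop 0).mono fun n hn => by
        rw [Real.norm_of_nonneg (by positivity), Real.norm_of_nonneg (by positivity)]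
        exact hK n hn
    refine (h.pow 5).congr_right fun n => ?_
    rw [← Real.rpow_mul_natCast n.cast_nonneg]
    norm_num
  have hlog : (fun x : ℝ => 1 + Real.log x) =o[atTop] fun x => x ^ (1 / 4 : ℝ) :=
    (isLittleO_const_left.2 <| .inr <| tendsto_norm_atTop_atTop.comp <|
      tendsto_rpow_atTop (by norm_num)).add (isLittleO_log_rpow_atTop (by norm_num))
  have hmul := hdiv.mul_isLittleO (hlog.comp_tendsto tendsto_natCast_atTop_atTop)
  refine (hmul.congr_right fun n => ?_).tendsto_div_nhds_zero
  rw [Function.comp_apply, ← Real.rpow_add_of_nonneg n.cast_nonneg (by norm_num) (by norm_num),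
    Real.sqrt_eq_rpow]
  norm_num

section

variable {n : ℕ} [NeZero n]

theorem card_gaussUnits_pos : (0 : ℝ) < (gaussUnits n).card :=
  pos_of_mul_pos_left ((pow_pos (Nat.cast_pos.2 (NeZero.pos n)) 2).trans_le
    (sq_le_card_gaussUnits_mul n)) (by positivity)

theorem mul_sqrt_le_errorTerm_mul (n : ℕ) [NeZero n] :
    n * (n.divisors.card : ℝ) ^ 3 * √n * (1 + Real.log n) ≤ errorTerm n * (gaussUnits n).card := by
  have hn : (0 : ℝ) < n := Nat.cast_pos.2 (NeZero.pos n)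
  calc n * (n.divisors.card : ℝ) ^ 3 * √n * (1 + Real.log n)
      = (n.divisors.card : ℝ) ^ 3 * (1 + Real.log n) / √n * n ^ 2 := by
        rw [div_mul_eq_mul_div, eq_div_iff (by positivity)]
        linear_combination n * (n.divisors.card : ℝ) ^ 3 * (1 + Real.log n) * Real.sq_sqrt hn.le
    _ ≤ (n.divisors.card : ℝ) ^ 3 * (1 + Real.log n) / √n *
          ((gaussUnits n).card * (n.divisors.card : ℝ) ^ 2) := by
        have := Real.log_natCast_nonneg n
        gcongr
        exact sq_le_card_gaussUnits_mul n
    _ = errorTerm n * (gaussUnits n).card := by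
        rw [errorTerm]
        ring

theorem mul_card_divisors_le_errorTerm_mul (n : ℕ) [NeZero n] :
    n * ((4 * n ^ 2).divisors.card : ℝ) ≤ 3 * (errorTerm n * (gaussUnits n).card) := by
  have hn : (1 : ℝ) ≤ n := Nat.one_le_cast.2 (NeZero.pos n)
  have hD : (1 : ℝ) ≤ n.divisors.card :=
    Nat.one_le_cast.2 (Finset.card_pos.2 (Nat.nonempty_divisors.2 (NeZero.ne n)))
  have hlog := Real.log_natCast_nonneg n
  have hd : (4 * n ^ 2).divisors.card ≤ 3 * n.divisors.card ^ 2 := by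
    have h4 : (Nat.divisors 4).card = 3 := by decide
    calc (4 * n ^ 2).divisors.card ≤ (Nat.divisors 4).card * (n ^ 2).divisors.card :=
          card_divisors_mul_le 4 _
      _ ≤ 3 * (n.divisors.card ^ 2) := by
          rw [h4, sq, sq]
          exact Nat.mul_le_mul_left 3 (card_divisors_mul_le n n)
  calc n * ((4 * n ^ 2).divisors.card : ℝ) ≤ n * (3 * (n.divisors.card : ℝ) ^ 2) := by
        gcongr
        exact_mod_cast hd
    _ = 3 * (n * (n.divisors.card : ℝ) ^ 2 * 1 * 1) := by ring
    _ ≤ 3 * (n * (n.divisors.card : ℝ) ^ 3 * √n * (1 + Real.log n)) := by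
        gcongr
        · norm_num
        · exact Real.one_le_sqrt.2 hn
        · linarith
    _ ≤ 3 * (errorTerm n * (gaussUnits n).card) :=
        mul_le_mul_of_nonneg_left (mul_sqrt_le_errorTerm_mul n) zero_le_three

theorem abs_div_card_gaussUnits_sub_le {x y C : ℝ}
    (h : |x - y * (gaussUnits n).card| ≤ C * (errorTerm n * (gaussUnits n).card)) :
    |x / (gaussUnits n).card - y| ≤ C * errorTerm n := by
  have hL := card_gaussUnits_pos (n := n)
  rw [div_sub' hL.ne', abs_div, abs_of_pos hL, div_le_iff₀ hL, mul_assoc]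
  rwa [mul_comm y] at h

theorem abs_ncard_ID_div_sub_one_le (hn : 2 ≤ n) :
    |4 * (n.totient : ℝ) * (ID n).ncard / (gaussUnits n).card - 1| ≤ 36 * errorTerm n := by
  refine abs_div_card_gaussUnits_sub_le ?_
  have h := abs_mul_ncard_ID_sub_le hn
  have herr := mul_card_divisors_le_errorTerm_mul n
  rw [one_mul]
  linarith

theorem abs_ncard_ID₀_div_sub_le (hn : 2 ≤ n) :
    |4 * (n.totient : ℝ) * (ID₀ n).ncard / (gaussUnits n).card -
      Real.pi / 2 * ∑ k ∈ Finset.Ioc 0 n, (ArithmeticFunction.moebius k : ℝ) / (k : ℝ) ^ 2| ≤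
      (36 + (8 * Real.pi + 1) / 2) * errorTerm n := by
  refine abs_div_card_gaussUnits_sub_le ?_
  have hID₀ := abs_mul_ncard_ID₀_sub_le hn
  have hshort := abs_two_mul_card_shortUnits_sub_le hn
  have herr := mul_card_divisors_le_errorTerm_mul n
  have herr' := mul_le_mul_of_nonneg_left (mul_sqrt_le_errorTerm_mul n)
    (by positivity : 0 ≤ 8 * Real.pi + 1)
  rw [abs_le] at hID₀ hshort ⊢
  constructor <;> linarith

end

section

open Filter

theorem tendsto_of_abs_sub_le_errorTerm {x y : ℕ → ℝ} {l C : ℝ} (hy : Tendsto y atTop (nhds l))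
    (h : ∀ n, 1 ≤ n → |x n - y n| ≤ C * errorTerm (n + 1)) : Tendsto x atTop (nhds l) := by
  have hzero : Tendsto (fun n => C * errorTerm (n + 1)) atTop (nhds 0) :=
    mul_zero C ▸ (tendsto_errorTerm.comp (tendsto_add_atTop_nat 1)).const_mul C
  simpa only [add_sub_cancel, add_zero] using
    hy.add (squeeze_zero_norm' ((eventually_ge_atTop 1).mono h) hzero)

theorem tendsto_ncard_ID_div :
    Tendsto (fun n : ℕ => 4 * ((n + 1).totient : ℝ) * (ID (n + 1 : ℕ)).ncard /
      (gaussUnits (n + 1)).card) atTop (nhds 1) :=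
  tendsto_of_abs_sub_le_errorTerm tendsto_const_nhds fun _ hn =>
    abs_ncard_ID_div_sub_one_le (Nat.succ_le_succ hn)

theorem tendsto_ncard_ID₀_div :
    Tendsto (fun n : ℕ => 4 * ((n + 1).totient : ℝ) * (ID₀ (n + 1 : ℕ)).ncard /
      (gaussUnits (n + 1)).card) atTop (nhds (3 / Real.pi)) := by
  have hlim : Real.pi / 2 * (6 / Real.pi ^ 2) = 3 / Real.pi := by
    field_simp
    norm_num
  exact tendsto_of_abs_sub_le_errorTerm
    (hlim ▸ (tendsto_sum_moebius_div_sq.comp (tendsto_add_atTop_nat 1)).const_mul _) fun _ hn =>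
    abs_ncard_ID₀_div_sub_le (Nat.succ_le_succ hn)

end

end ApollonianStair

/-- As `n → ∞`, the proportion of primitive integral `n`-quadruple classes whose
packing contains a circle of nonpositive curvature tangent to the circle of
curvature `n` tends to `3/π`. -/
theorem apollonian_bottom_stair_probability :
    Filter.Tendsto (fun n : ℕ => ((ID₀ (n : ℤ)).ncard : ℝ) / ((ID (n : ℤ)).ncard : ℝ))
      Filter.atTop (nhds (3 / Real.pi)) := by
  rw [← Filter.tendsto_add_atTop_iff_nat 1, ← div_one (3 / Real.pi)]
  refine (ApollonianStair.tendsto_ncard_ID₀_div.div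
    ApollonianStair.tendsto_ncard_ID_div one_ne_zero).congr fun n => ?_
  have hφ : 4 * ((n + 1).totient : ℝ) ≠ 0 :=
    mul_ne_zero four_ne_zero (Nat.cast_ne_zero.2 (Nat.totient_pos.2 n.succ_pos).ne')
  rw [Pi.div_apply, div_div_div_cancel_right₀ ApollonianStair.card_gaussUnits_pos.ne',
    mul_div_mul_left _ _ hφ]
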